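/- arXiv:1311.3464 — 2 statements merged into one kernel-verified Lean document; each statement's English description precedes it below -/
import Mathlib

section
/- Fix p > 0. Let B_p^n = {x ∈ ℝⁿ : |x_1|^p + ... + |x_n|^p ≤ 1}, and let c_{p,n} > 0 be chosen so that the random vector X distributed uniformly on c_{p,n}B_p^n is isotropic. Then for every θ ∈ S^{n-1}, every t ∈ ℝ, and G a standard Gaussian random variable, |P(θ·X ≤ t) − P(G ≤ t)| ≤ C_p Σ_{k=1}^n |θ_k|³, where C_p > 0 depends only on p and not on n. -/
open MeasureTheory ProbabilityTheory Real
open scoped Pointwise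

/-!
Let `Y` have i.i.d. coordinates with density proportional to `exp (-β |x| ^ p)`, normalised to unit
variance. By homogeneity `Y` has the law of `W • X`, where `X` is uniform on `c B_p^n` and
`W = R ^ (1 / p)` with `R` an independent gamma variable of shape `n / p + 1`. The Berry-Esseen
bound, obtained by Fourier inversion, controls `θ · Y = W (θ · X)`; the characteristic function of a
coordinate is `O (1 / |u|)` because a coordinate is itself a scale mixture of uniform variables.
Comparing second moments gives `E W ^ 2 = 1`, and then log-convexity of the gamma function gives
`E (W - 1) ^ 2 = O (1 / n)`. As `n ^ (-1 / 2) ≤ ∑ |θ k| ^ 3` by Cauchy-Schwarz, `W` can be removed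
within the allowed error.
-/

section GaussianCdf

lemma abs_cdf_sub_cdf_le_one (μ ν : Measure ℝ) (x y : ℝ) : |cdf μ x - cdf ν y| ≤ 1 := by
  rw [abs_le]
  constructor <;> linarith [cdf_nonneg μ x, cdf_nonneg ν y, cdf_le_one μ x, cdf_le_one ν y]

lemma cdf_gaussianReal_sub_cdf (m : ℝ) {v : NNReal} (hv : v ≠ 0) (a b : ℝ) :
    cdf (gaussianReal m v) b - cdf (gaussianReal m v) a = ∫ x in a..b, gaussianPDFReal m v x := by
  have cdf_eq (t : ℝ) : cdf (gaussianReal m v) t = ∫ x in Set.Iic t, gaussianPDFReal m v x := by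
    rw [cdf_eq_real, measureReal_def, gaussianReal_apply_eq_integral m hv,
      ENNReal.toReal_ofReal (integral_nonneg fun x => gaussianPDFReal_nonneg m v x)]
  have integrable := integrable_gaussianPDFReal m v
  rw [cdf_eq, cdf_eq, intervalIntegral.integral_Iic_sub_Iic integrable.integrableOn
    integrable.integrableOn]

lemma abs_mul_exp_neg_sq_div_two_le_one (x : ℝ) : |x| * exp (-x ^ 2 / 2) ≤ 1 := by
  have abs_le_exp : |x| ≤ exp (x ^ 2 / 2) := by
    nlinarith [add_one_le_exp (x ^ 2 / 2), sq_nonneg (|x| - 1), sq_abs x]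
  calc |x| * exp (-x ^ 2 / 2) ≤ exp (x ^ 2 / 2) * exp (-x ^ 2 / 2) := by gcongr
    _ = 1 := by rw [← exp_add, neg_div, add_neg_cancel, exp_zero]

lemma abs_mul_gaussianPDFReal_le_one (x : ℝ) : |x| * gaussianPDFReal 0 1 x ≤ 1 := by
  have inv_sqrt_le_one : (√(2 * π))⁻¹ ≤ 1 :=
    inv_le_one_of_one_le₀ (one_le_sqrt.2 (by linarith [pi_gt_three]))
  calc |x| * gaussianPDFReal 0 1 x = (√(2 * π))⁻¹ * (|x| * exp (-x ^ 2 / 2)) := by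
        simp only [gaussianPDFReal, NNReal.coe_one, mul_one, sub_zero]
        ring
    _ ≤ 1 := mul_le_one₀ inv_sqrt_le_one (by positivity) (abs_mul_exp_neg_sq_div_two_le_one x)

lemma abs_cdf_gaussianReal_mul_sub_le {w : ℝ} (hw : 1 ≤ w) (s : ℝ) :
    |cdf (gaussianReal 0 1) (s * w) - cdf (gaussianReal 0 1) s| ≤ w - 1 := by
  rcases eq_or_ne s 0 with rfl | hs
  · simpa using hw
  have pdf_le (x : ℝ) (hx : x ∈ Set.uIoc s (s * w)) : ‖gaussianPDFReal 0 1 x‖ ≤ |s|⁻¹ := by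
    have s_le_x : |s| ≤ |x| := by
      rcases hs.lt_or_gt with hs | hs
      · rw [Set.uIoc_of_ge (by nlinarith)] at hx
        rw [abs_of_neg hs, abs_of_nonpos (hx.2.trans hs.le)]
        linarith [hx.2]
      · rw [Set.uIoc_of_le (by nlinarith)] at hx
        exact abs_le_abs_of_nonneg hs.le hx.1.le
    rw [norm_of_nonneg (gaussianPDFReal_nonneg 0 1 x), ← one_div, le_div_iff₀' (abs_pos.2 hs)]
    exact (mul_le_mul_of_nonneg_right s_le_x (gaussianPDFReal_nonneg 0 1 x)).trans
      (abs_mul_gaussianPDFReal_le_one x)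
  calc |cdf (gaussianReal 0 1) (s * w) - cdf (gaussianReal 0 1) s|
      = ‖∫ x in s..s * w, gaussianPDFReal 0 1 x‖ := by
        rw [cdf_gaussianReal_sub_cdf 0 one_ne_zero, norm_eq_abs]
    _ ≤ |s|⁻¹ * |s * w - s| := intervalIntegral.norm_integral_le_of_norm_le_const pdf_le
    _ = w - 1 := by
        rw [← mul_sub_one, abs_mul, inv_mul_cancel_left₀ (abs_ne_zero.2 hs),
          abs_of_nonneg (sub_nonneg.2 hw)]

lemma abs_cdf_gaussianReal_div_sub_le {w : ℝ} (hw : 0 < w) (t : ℝ) :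
    |cdf (gaussianReal 0 1) (t / w) - cdf (gaussianReal 0 1) t| ≤ 2 * |w - 1| := by
  rcases le_total 1 w with one_le | le_one
  · have := abs_cdf_gaussianReal_mul_sub_le one_le (t / w)
    rw [div_mul_cancel₀ t hw.ne'] at this
    rw [abs_sub_comm, abs_of_nonneg (sub_nonneg.2 one_le)]
    linarith
  rw [abs_of_nonpos (sub_nonpos.2 le_one)]
  rcases le_total w (1 / 2) with w_small | w_large
  · linarith [abs_cdf_sub_cdf_le_one (gaussianReal 0 1) (gaussianReal 0 1) (t / w) t]
  · calc |cdf (gaussianReal 0 1) (t / w) - cdf (gaussianReal 0 1) t| ≤ w⁻¹ - 1 :=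
          abs_cdf_gaussianReal_mul_sub_le (one_le_inv₀ hw |>.2 le_one) t
      _ = (1 - w) / w := by field_simp
      _ ≤ 2 * -(w - 1) := by rw [div_le_iff₀ hw]; nlinarith

end GaussianCdf

section Demixing

variable {ν μ : Measure ℝ} [IsProbabilityMeasure ν] [IsProbabilityMeasure μ] {η : ℝ}

lemma sub_mul_le_integral {f : ℝ → ℝ} {A : Set ℝ} {m D δ : ℝ} (hf : Integrable f ν)
    (hA : MeasurableSet A) (hAδ : ν.real Aᶜ ≤ δ) (hm : ∀ᵐ w ∂ν, w ∈ A → m ≤ f w)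
    (hD : ∀ w, -D ≤ f w) (hDm : -D ≤ m) : m - δ * (m + D) ≤ ∫ w, f w ∂ν := by
  have indicator_integrable : Integrable (Aᶜ.indicator fun _ => m + D) ν :=
    (integrable_const _).indicator hA.compl
  calc m - δ * (m + D) ≤ m - ν.real Aᶜ * (m + D) := by gcongr; linarith
    _ = ∫ w, (m - Aᶜ.indicator (fun _ => m + D) w) ∂ν := by
        rw [integral_sub (integrable_const m) indicator_integrable, integral_const,
          integral_indicator_const _ hA.compl, probReal_univ, one_smul, smul_eq_mul]
    _ ≤ ∫ w, f w ∂ν := by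
        refine integral_mono_ae ((integrable_const m).sub indicator_integrable) hf ?_
        filter_upwards [hm] with w hw
        by_cases hwA : w ∈ A
        · simpa [hwA] using hw hwA
        · simpa [hwA] using hD w

lemma measurable_cdf (μ : Measure ℝ) : Measurable (cdf μ) := (monotone_cdf μ).measurable

lemma integrable_cdf_comp {g : ℝ → ℝ} (hg : Measurable g) (μ : Measure ℝ) :
    Integrable (fun w => cdf μ (g w)) ν :=
  .of_bound (C := 1) ((measurable_cdf μ).comp hg).aestronglyMeasurable
    (.of_forall fun w => by
      rw [norm_of_nonneg (cdf_nonneg μ (g w))]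
      exact cdf_le_one μ (g w))

lemma cdf_mconv (hν : ∀ᵐ w ∂ν, 0 < w) (t : ℝ) :
    cdf (ν ∗ₘ μ) t = ∫ w, cdf μ (t / w) ∂ν := by
  have slice (w : ℝ) (hw : 0 < w) :
      μ (Prod.mk w ⁻¹' ((fun z : ℝ × ℝ => z.1 * z.2) ⁻¹' Set.Iic t)) = μ (Set.Iic (t / w)) := by
    congr 1
    ext x
    simp [le_div_iff₀' hw]
  rw [cdf_eq_real, measureReal_def, Measure.mconv, Measure.map_apply measurable_mul
    measurableSet_Iic, Measure.prod_apply (measurable_mul measurableSet_Iic),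
    lintegral_congr_ae (hν.mono slice),
    integral_eq_lintegral_of_nonneg_ae (.of_forall fun w => cdf_nonneg μ _)
      (integrable_cdf_comp (by fun_prop) μ).aestronglyMeasurable]
  simp only [ofReal_cdf]

lemma integral_abs_sub_one_le (hη : 0 ≤ η) (hint : Integrable (fun w => (w - 1) ^ 2) ν)
    (hsq : ∫ w, (w - 1) ^ 2 ∂ν ≤ η ^ 2) :
    Integrable (fun w => |w - 1|) ν ∧ ∫ w, |w - 1| ∂ν ≤ η := by
  have memLp : MemLp (fun w : ℝ => |w - 1|) 2 ν := by
    rw [memLp_two_iff_integrable_sq (by fun_prop)]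
    simpa only [sq_abs] using hint
  refine ⟨memLp.integrable one_le_two,
    (le_abs_self _).trans (abs_le_of_sq_le_sq (le_trans ?_ hsq) hη)⟩
  have variance_eq := variance_eq_sub memLp
  have := variance_nonneg (fun w => |w - 1|) ν
  simp only [Pi.pow_apply, sq_abs] at variance_eq
  linarith

lemma measureReal_two_mul_lt_abs_sub_one_le (hη : 0 < η)
    (hint : Integrable (fun w => (w - 1) ^ 2) ν) (hsq : ∫ w, (w - 1) ^ 2 ∂ν ≤ η ^ 2) :
    ν.real {w | |w - 1| ≤ 2 * η}ᶜ ≤ 1 / 4 := by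
  have subset : {w | |w - 1| ≤ 2 * η}ᶜ ⊆ {w | (2 * η) ^ 2 ≤ (w - 1) ^ 2} := fun w hw => by
    simpa only [Set.mem_ofPred_eq, sq_abs] using
      pow_le_pow_left₀ (by positivity) (not_le.1 hw : 2 * η < |w - 1|).le 2
  have markov := (mul_meas_ge_le_integral_of_nonneg (.of_forall fun w => sq_nonneg (w - 1)) hint
    ((2 * η) ^ 2)).trans hsq
  have := measureReal_mono (μ := ν) subset
  nlinarith [pow_pos hη 2]

lemma exists_le_mul_div (hη : 0 < η) (hη' : η ≤ 1 / 4) (t : ℝ) :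
    ∃ s : ℝ, 0 < s ∧ |s - 1| ≤ 2 * η ∧ ∀ w, 0 < w → |w - 1| ≤ 2 * η → t ≤ t * s / w := by
  rcases le_total 0 t with ht | ht
  · refine ⟨1 + 2 * η, by positivity, by rw [abs_of_nonneg] <;> linarith, fun w hw hwη => ?_⟩
    rw [le_div_iff₀ hw]
    have := (abs_le.1 hwη).2
    gcongr
    linarith
  · refine ⟨1 - 2 * η, by linarith, by rw [abs_of_nonpos] <;> linarith, fun w hw hwη => ?_⟩
    rw [le_div_iff₀ hw]
    exact mul_le_mul_of_nonpos_left (by linarith [(abs_le.1 hwη).1]) ht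

lemma mul_le_abs_of_abs_eq_one {σ : ℝ} (hσ : |σ| = 1) (x : ℝ) : σ * x ≤ |x| :=
  (le_abs_self _).trans_eq (by rw [abs_mul, hσ, one_mul])

lemma integral_signed_cdf_sub_gaussian_le {σ x ε : ℝ} (hν : ∀ᵐ w ∂ν, 0 < w) (hη : 0 ≤ η)
    (hint : Integrable (fun w => (w - 1) ^ 2) ν) (hsq : ∫ w, (w - 1) ^ 2 ∂ν ≤ η ^ 2)
    (hσ : |σ| = 1) (hε : |cdf (ν ∗ₘ μ) x - cdf (gaussianReal 0 1) x| ≤ ε) :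
    ∫ w, σ * (cdf μ (x / w) - cdf (gaussianReal 0 1) (x / w)) ∂ν ≤ ε + 2 * η := by
  set Φ := cdf (gaussianReal 0 1)
  obtain ⟨abs_integrable, abs_le⟩ := integral_abs_sub_one_le hη hint hsq
  have F_integrable : Integrable (fun w => cdf μ (x / w)) ν := integrable_cdf_comp (by fun_prop) μ
  have Φ_integrable : Integrable (fun w => Φ (x / w)) ν := integrable_cdf_comp (by fun_prop) _
  calc ∫ w, σ * (cdf μ (x / w) - Φ (x / w)) ∂ν
      = σ * (cdf (ν ∗ₘ μ) x - Φ x) + ∫ w, σ * (Φ x - Φ (x / w)) ∂ν := by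
        rw [cdf_mconv hν, integral_const_mul, integral_const_mul,
          integral_sub F_integrable Φ_integrable,
          integral_sub (integrable_const _) Φ_integrable, integral_const, probReal_univ, one_smul]
        ring
    _ ≤ ε + ∫ w, 2 * |w - 1| ∂ν := by
        refine add_le_add ((mul_le_abs_of_abs_eq_one hσ _).trans hε) (integral_mono_ae
          (((integrable_const _).sub Φ_integrable).const_mul σ) (abs_integrable.const_mul 2) ?_)
        filter_upwards [hν] with w hw
        exact (mul_le_abs_of_abs_eq_one hσ _).trans
          ((abs_sub_comm _ _).trans_le (abs_cdf_gaussianReal_div_sub_le hw x))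
    _ ≤ ε + 2 * η := by rw [integral_const_mul]; gcongr

lemma signed_cdf_sub_gaussian_le {σ t s D ε : ℝ} (hν : ∀ᵐ w ∂ν, 0 < w) (hη : 0 < η)
    (hint : Integrable (fun w => (w - 1) ^ 2) ν) (hsq : ∫ w, (w - 1) ^ 2 ∂ν ≤ η ^ 2)
    (hσ : |σ| = 1) (hD : ∀ x, |cdf μ x - cdf (gaussianReal 0 1) x| ≤ D)
    (hε : |cdf (ν ∗ₘ μ) (t * s) - cdf (gaussianReal 0 1) (t * s)| ≤ ε) (hs : 0 < s)
    (hsη : |s - 1| ≤ 2 * η)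
    (hmono : ∀ w, 0 < w → |w - 1| ≤ 2 * η → σ * cdf μ t ≤ σ * cdf μ (t * s / w)) :
    σ * (cdf μ t - cdf (gaussianReal 0 1) t) ≤ 8 * η + 4 / 3 * (D / 4 + ε + 2 * η) := by
  set F := cdf μ
  set Φ := cdf (gaussianReal 0 1)
  have D_nonneg : 0 ≤ D := (abs_nonneg _).trans (hD 0)
  have ε_nonneg : 0 ≤ ε := (abs_nonneg _).trans hε
  by_cases hm : -D ≤ σ * (F t - Φ t) - 8 * η
  swap
  · linarith
  have Φ_t : σ * (Φ (t * s) - Φ t) ≤ 4 * η := by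
    have := abs_cdf_gaussianReal_div_sub_le hs (t * s)
    rw [mul_div_cancel_right₀ t hs.ne', abs_sub_comm] at this
    linarith [mul_le_abs_of_abs_eq_one hσ (Φ (t * s) - Φ t)]
  have integrable : Integrable (fun w => σ * (F (t * s / w) - Φ (t * s / w))) ν :=
    ((integrable_cdf_comp (by fun_prop) _).sub (integrable_cdf_comp (by fun_prop) _)).const_mul σ
  have upper := integral_signed_cdf_sub_gaussian_le hν hη.le hint hsq hσ hε
  have lower := sub_mul_le_integral integrable (measurableSet_le (by fun_prop) measurable_const)
    (measureReal_two_mul_lt_abs_sub_one_le hη hint hsq) ?_ ?_ hm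
  · linarith
  · filter_upwards [hν] with w hw hwη
    have := (mul_le_abs_of_abs_eq_one hσ _).trans (abs_cdf_gaussianReal_div_sub_le hw (t * s))
    linarith [hmono w hw hwη, Set.mem_ofPred_eq.mp hwη]
  · intro w
    have := (mul_le_abs_of_abs_eq_one hσ (-(F (t * s / w) - Φ (t * s / w)))).trans
      ((abs_neg _).trans_le (hD _))
    linarith

theorem abs_cdf_sub_gaussian_le_of_mconv {ε : ℝ} (hν : ∀ᵐ w ∂ν, 0 < w) (hη : 0 < η)
    (hint : Integrable (fun w => (w - 1) ^ 2) ν) (hsq : ∫ w, (w - 1) ^ 2 ∂ν ≤ η ^ 2)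
    (hε : ∀ t, |cdf (ν ∗ₘ μ) t - cdf (gaussianReal 0 1) t| ≤ ε) (t : ℝ) :
    |cdf μ t - cdf (gaussianReal 0 1) t| ≤ 2 * ε + 16 * η := by
  have ε_nonneg : 0 ≤ ε := (abs_nonneg _).trans (hε 0)
  rcases le_total (1 / 4) η with hη' | hη'
  · linarith [abs_cdf_sub_cdf_le_one μ (gaussianReal 0 1) t t]
  have le_sup := le_ciSup (f := fun t => |cdf μ t - cdf (gaussianReal 0 1) t|)
    ⟨1, by rintro _ ⟨t, rfl⟩; exact abs_cdf_sub_cdf_le_one _ _ _ _⟩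
  set D := ⨆ t, |cdf μ t - cdf (gaussianReal 0 1) t|
  -- On the event `|w - 1| ≤ 2 * η`, of probability at least `3 / 4`, replacing `t` by `t * s` keeps
  -- `t * s / w` on one side of `t`; the complementary event costs only `D / 4`.
  have self_bound (t : ℝ) :
      |cdf μ t - cdf (gaussianReal 0 1) t| ≤ 8 * η + 4 / 3 * (D / 4 + ε + 2 * η) := by
    rw [abs_le']
    constructor
    · obtain ⟨s, hs, hsη, le⟩ := exists_le_mul_div hη hη' t
      simpa using signed_cdf_sub_gaussian_le (σ := 1) hν hη hint hsq (by simp) le_sup (hε _) hs hsη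
        fun w hw hwη => mul_le_mul_of_nonneg_left (monotone_cdf μ (le w hw hwη)) zero_le_one
    · obtain ⟨s, hs, hsη, le⟩ := exists_le_mul_div hη hη' (-t)
      have ge (w : ℝ) (hw : 0 < w) (hwη : |w - 1| ≤ 2 * η) : t * s / w ≤ t := by
        simpa [neg_div] using le w hw hwη
      simpa using signed_cdf_sub_gaussian_le (σ := -1) hν hη hint hsq (by simp) le_sup (hε _) hs hsη
        fun w hw hwη => mul_le_mul_of_nonpos_left (monotone_cdf μ (ge w hw hwη)) (by simp)
  linarith [ciSup_le self_bound, le_sup t]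

end Demixing

section FourierBound

open scoped FourierTransform

/-- The signed indicator that `x` lies between `y.1` and `y.2`: it equals `1` when
`y.1 ≤ x < y.2` and `-1` when `y.2 ≤ x < y.1`. Averaged over a pair of independent random variables
`y`, it becomes the difference of their distribution functions at `x`. -/
noncomputable def crossing (x : ℝ) (y : ℝ × ℝ) : ℂ :=
  (if y.1 ≤ x then 1 else 0) - (if y.2 ≤ x then 1 else 0)

lemma crossing_swap (x : ℝ) (y : ℝ × ℝ) : crossing x y.swap = -crossing x y := by
  simp [crossing]

lemma crossing_of_le {y : ℝ × ℝ} (h : y.1 ≤ y.2) (x : ℝ) :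
    crossing x y = (Set.Ico y.1 y.2).indicator 1 x := by
  rcases lt_or_ge x y.2 with hx | hx
  · simp [crossing, Set.indicator, hx, hx.not_ge]
  · simp [crossing, hx, h.trans hx, hx.not_gt]

lemma measurable_crossing : Measurable fun z : ℝ × (ℝ × ℝ) => crossing z.1 z.2 :=
  (Measurable.ite (measurableSet_le (by fun_prop) (by fun_prop)) measurable_const
    measurable_const).sub
  (Measurable.ite (measurableSet_le (by fun_prop) (by fun_prop)) measurable_const measurable_const)

lemma integral_mul_crossing (f : ℝ → ℂ) (y : ℝ × ℝ) :
    ∫ x, f x * crossing x y = ∫ x in y.1..y.2, f x := by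
  have ordered (y : ℝ × ℝ) (h : y.1 ≤ y.2) :
      ∫ x, f x * crossing x y = ∫ x in y.1..y.2, f x := by
    simp only [crossing_of_le h]
    rw [intervalIntegral.integral_of_le h, ← integral_Ico_eq_integral_Ioc,
      ← integral_indicator measurableSet_Ico]
    congr with x
    simp [Set.indicator]
  rcases le_total y.1 y.2 with h | h
  · exact ordered y h
  · rw [intervalIntegral.integral_symm]
    refine Eq.trans ?_ (congrArg _ (ordered y.swap h))
    rw [← integral_neg]
    congr with x
    rw [crossing_swap, mul_neg, neg_neg]

lemma integrable_crossing_left (y : ℝ × ℝ) :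
    Integrable (fun x => crossing x y) ∧ ∫ x, ‖crossing x y‖ = |y.1 - y.2| := by
  have ordered (y : ℝ × ℝ) (h : y.1 ≤ y.2) :
      Integrable (fun x => crossing x y) ∧ ∫ x, ‖crossing x y‖ = |y.1 - y.2| := by
    simp only [crossing_of_le h, norm_indicator_eq_indicator_norm]
    constructor
    · exact (integrableOn_const (by simp)).integrable_indicator measurableSet_Ico
    · rw [integral_indicator measurableSet_Ico, abs_sub_comm, abs_of_nonneg (sub_nonneg.2 h)]
      simp [h]
  rcases le_total y.1 y.2 with h | h
  · exact ordered y h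
  · obtain ⟨integrable, integral_eq⟩ := ordered y.swap h
    simp only [crossing_swap, norm_neg, Prod.fst_swap, Prod.snd_swap] at integrable integral_eq
    exact ⟨by simpa using integrable.neg, by rw [integral_eq, abs_sub_comm]⟩

variable {μ ν : Measure ℝ} [IsProbabilityMeasure μ] [IsProbabilityMeasure ν]

lemma integrable_crossing (hμ : Integrable id μ) (hν : Integrable id ν) :
    Integrable (fun z : ℝ × (ℝ × ℝ) => crossing z.1 z.2) (volume.prod (μ.prod ν)) := by
  rw [integrable_prod_iff' measurable_crossing.aestronglyMeasurable]
  refine ⟨.of_forall fun y => (integrable_crossing_left y).1, ?_⟩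
  simp only [(integrable_crossing_left _).2]
  exact ((hμ.comp_fst ν).sub (hν.comp_snd μ)).abs

lemma integral_crossing (x : ℝ) :
    ∫ y, crossing x y ∂(μ.prod ν) = ((cdf μ x - cdf ν x : ℝ) : ℂ) := by
  have ite_eq (y : ℝ) : (if y ≤ x then 1 else 0 : ℂ) = (Set.Iic x).indicator 1 y := by
    simp [Set.indicator]
  have integrable (κ : Measure ℝ) [IsProbabilityMeasure κ] :
      Integrable ((Set.Iic x).indicator (1 : ℝ → ℂ)) κ :=
    (integrable_const 1).indicator measurableSet_Iic
  simp only [crossing, ite_eq]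
  rw [integral_sub ((integrable μ).comp_fst ν) ((integrable ν).comp_snd μ), integral_fun_fst,
    integral_fun_snd, integral_indicator measurableSet_Iic, integral_indicator measurableSet_Iic]
  simp [cdf_eq_real]

lemma integrable_cdf_sub_cdf (hμ : Integrable id μ) (hν : Integrable id ν) :
    Integrable fun x => ((cdf μ x - cdf ν x : ℝ) : ℂ) := by
  simpa only [integral_crossing] using (integrable_crossing hμ hν).integral_prod_left

lemma integral_mul_cdf_sub_cdf (hμ : Integrable id μ) (hν : Integrable id ν) {f : ℝ → ℂ} {c : ℝ}
    (hf : AEStronglyMeasurable f) (hfc : ∀ x, ‖f x‖ ≤ c) :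
    ∫ x, f x * ((cdf μ x - cdf ν x : ℝ) : ℂ) = ∫ y, (∫ x in y.1..y.2, f x) ∂(μ.prod ν) := by
  simp only [← integral_crossing, ← integral_mul_crossing, ← integral_const_mul]
  exact integral_integral_swap
    ((integrable_crossing hμ hν).bdd_mul hf.comp_fst (.of_forall fun z => hfc z.1))

lemma integrable_exp_mul_I (μ : Measure ℝ) [IsFiniteMeasure μ] (a : ℝ) :
    Integrable (fun x : ℝ => Complex.exp (a * x * Complex.I)) μ :=
  .of_bound (C := 1) (by fun_prop) (.of_forall fun x => by
    rw [← Complex.ofReal_mul, Complex.norm_exp_ofReal_mul_I])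

lemma fourier_cdf_sub_cdf (hμ : Integrable id μ) (hν : Integrable id ν) {ξ : ℝ} (hξ : ξ ≠ 0) :
    𝓕 (fun x => ((cdf μ x - cdf ν x : ℝ) : ℂ)) ξ
      = (charFun ν (-2 * π * ξ) - charFun μ (-2 * π * ξ)) / ((-2 * π * ξ : ℝ) * Complex.I) := by
  set a : ℝ := -2 * π * ξ with a_eq
  have a_ne : (a * Complex.I : ℂ) ≠ 0 := by simp [a_eq, hξ, pi_ne_zero]
  have primitive (y : ℝ × ℝ) : ∫ x in y.1..y.2, Complex.exp (a * x * Complex.I)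
      = (Complex.exp (a * y.2 * Complex.I) - Complex.exp (a * y.1 * Complex.I))
        / (a * Complex.I) := by
    simp only [mul_right_comm _ _ Complex.I]
    exact integral_exp_mul_complex a_ne
  have kernel (x : ℝ) : Complex.exp (↑(-2 * π * inner ℝ x ξ) * Complex.I)
      = Complex.exp (a * x * Complex.I) := by
    simp [a_eq]
    ring_nf
  simp only [Real.fourier_eq', kernel, smul_eq_mul]
  rw [integral_mul_cdf_sub_cdf hμ hν (c := 1) (by fun_prop) fun x => by
    rw [← Complex.ofReal_mul, Complex.norm_exp_ofReal_mul_I]]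
  simp only [primitive]
  rw [integral_div, integral_sub ((integrable_exp_mul_I ν a).comp_snd μ)
    ((integrable_exp_mul_I μ a).comp_fst ν),
    integral_fun_snd (fun x : ℝ => Complex.exp (a * x * Complex.I)),
    integral_fun_fst (fun x : ℝ => Complex.exp (a * x * Complex.I)),
    charFun_apply_real, charFun_apply_real]
  simp only [probReal_univ, one_smul]

lemma dense_continuousAt_cdf (μ ν : Measure ℝ) :
    Dense {x | ContinuousAt (cdf μ) x ∧ ContinuousAt (cdf ν) x} := by
  convert ((monotone_cdf μ).countable_not_continuousAt.union
    (monotone_cdf ν).countable_not_continuousAt).dense_compl ℝ using 1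
  ext x
  simp

lemma abs_cdf_sub_cdf_le_of_continuousAt {b : ℝ → ℝ} (hμ : Integrable id μ) (hν : Integrable id ν)
    (hb : Integrable b) (hb0 : ∀ t, 0 ≤ b t)
    (hbound : ∀ t, ‖charFun μ t - charFun ν t‖ ≤ |t| * b t) {x : ℝ}
    (hxμ : ContinuousAt (cdf μ) x) (hxν : ContinuousAt (cdf ν) x) :
    |cdf μ x - cdf ν x| ≤ ∫ t, b t := by
  set H : ℝ → ℂ := fun x => ((cdf μ x - cdf ν x : ℝ) : ℂ)
  have H_integrable : Integrable H := integrable_cdf_sub_cdf hμ hν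
  have H_continuousAt : ContinuousAt H x :=
    Complex.continuous_ofReal.continuousAt.comp (hxμ.sub hxν)
  have norm_fourier_le : ∀ᵐ ξ, ‖𝓕 H ξ‖ ≤ b (-2 * π * ξ) := by
    filter_upwards [compl_mem_ae_iff.2 (measure_singleton (0 : ℝ))] with ξ hξ
    have : 0 < |-2 * π * ξ| := abs_pos.2 (mul_ne_zero (by simp [pi_ne_zero]) hξ)
    rw [fourier_cdf_sub_cdf hμ hν hξ, norm_div, norm_sub_rev, norm_mul, Complex.norm_I, mul_one,
      Complex.norm_real, norm_eq_abs, div_le_iff₀ this, mul_comm (b _)]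
    exact hbound _
  have b_integrable : Integrable fun ξ => b (-2 * π * ξ) :=
    hb.comp_mul_left' (by simp [pi_ne_zero])
  have fourier_integrable : Integrable (𝓕 H) :=
    b_integrable.mono' (VectorFourier.fourierIntegral_continuous continuous_fourierChar
      continuous_inner H_integrable).aestronglyMeasurable norm_fourier_le
  calc |cdf μ x - cdf ν x| = ‖𝓕⁻ (𝓕 H) x‖ := by
        rw [H_integrable.fourierInv_fourier_eq fourier_integrable H_continuousAt,
          Complex.norm_real, norm_eq_abs]
    _ ≤ ∫ ξ, ‖𝓕 H ξ‖ := by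
        rw [Real.fourierInv_eq']
        refine (norm_integral_le_integral_norm _).trans_eq ?_
        simp only [norm_smul, Complex.norm_exp_ofReal_mul_I, one_mul]
    _ ≤ ∫ ξ, b (-2 * π * ξ) := integral_mono_ae fourier_integrable.norm b_integrable norm_fourier_le
    _ = |(-2 * π)⁻¹| * ∫ t, b t := by rw [Measure.integral_comp_mul_left, smul_eq_mul]
    _ ≤ 1 * ∫ t, b t := by
        refine mul_le_mul_of_nonneg_right ?_ (integral_nonneg hb0)
        rw [abs_inv, abs_mul, abs_of_pos pi_pos, abs_neg, abs_two]
        exact inv_le_one_of_one_le₀ (by linarith [pi_gt_three])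
    _ = ∫ t, b t := one_mul _

theorem abs_cdf_sub_cdf_le_integral {b : ℝ → ℝ} (hμ : Integrable id μ) (hν : Integrable id ν)
    (hb : Integrable b) (hb0 : ∀ t, 0 ≤ b t)
    (hbound : ∀ t, ‖charFun μ t - charFun ν t‖ ≤ |t| * b t) (x : ℝ) :
    |cdf μ x - cdf ν x| ≤ ∫ t, b t := by
  have right_continuous : ContinuousWithinAt (fun y => |cdf μ y - cdf ν y|) (Set.Ioi x) x :=
    (((cdf μ).right_continuous x).sub ((cdf ν).right_continuous x)).abs.mono
      Set.Ioi_subset_Ici_self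
  have x_mem_closure : x ∈ closure
      (Set.Ioi x ∩ {x | ContinuousAt (cdf μ) x ∧ ContinuousAt (cdf ν) x}) :=
    closure_minimal ((dense_continuousAt_cdf μ ν).open_subset_closure_inter isOpen_Ioi)
      isClosed_closure (by simp [closure_Ioi])
  exact (right_continuous.mono Set.inter_subset_left).closure_le x_mem_closure
    continuousWithinAt_const fun y hy =>
      abs_cdf_sub_cdf_le_of_continuousAt hμ hν hb hb0 hbound hy.2.1 hy.2.2

end FourierBound

section ProductEstimates

variable {ι : Type*}

lemma norm_prod_sub_prod_le {R : Type*} [NormedCommRing R] [NormOneClass R] (s : Finset ι)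
    {a b : ι → R} {d : ι → ℝ} (hd : ∀ i, 0 < d i) (ha : ∀ i, ‖a i‖ ≤ d i) (hb : ∀ i, ‖b i‖ ≤ d i) :
    ‖∏ i ∈ s, a i - ∏ i ∈ s, b i‖ ≤ (∏ i ∈ s, d i) * ∑ i ∈ s, ‖a i - b i‖ / d i := by
  classical
  induction s using Finset.induction_on with
  | empty => simp
  | insert k s hk ih =>
    rw [Finset.prod_insert hk, Finset.prod_insert hk, Finset.prod_insert hk, Finset.sum_insert hk]
    have prod_le : ‖∏ i ∈ s, a i‖ ≤ ∏ i ∈ s, d i :=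
      (Finset.norm_prod_le s a).trans
        (Finset.prod_le_prod (fun i _ => norm_nonneg _) fun i _ => ha i)
    calc ‖a k * ∏ i ∈ s, a i - b k * ∏ i ∈ s, b i‖
        = ‖(a k - b k) * ∏ i ∈ s, a i + b k * (∏ i ∈ s, a i - ∏ i ∈ s, b i)‖ := by
          congr 1
          ring
      _ ≤ ‖a k - b k‖ * ‖∏ i ∈ s, a i‖ + ‖b k‖ * ‖∏ i ∈ s, a i - ∏ i ∈ s, b i‖ :=
          (norm_add_le _ _).trans (add_le_add (norm_mul_le _ _) (norm_mul_le _ _))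
      _ ≤ ‖a k - b k‖ * (∏ i ∈ s, d i)
            + d k * ((∏ i ∈ s, d i) * ∑ i ∈ s, ‖a i - b i‖ / d i) := by
          gcongr
          · exact (hd k).le
          · exact hb k
      _ = d k * (∏ i ∈ s, d i) * (‖a k - b k‖ / d k + ∑ i ∈ s, ‖a i - b i‖ / d i) := by
          field [(hd k).ne']

lemma one_add_sum_le_prod_one_add {R : Type*} [CommSemiring R] [PartialOrder R]
    [IsOrderedRing R] (s : Finset ι) {f : ι → R} (hf : ∀ i, 0 ≤ f i) :
    1 + ∑ i ∈ s, f i ≤ ∏ i ∈ s, (1 + f i) := by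
  classical
  induction s using Finset.induction_on with
  | empty => simp
  | insert k s hk ih =>
    rw [Finset.prod_insert hk, Finset.sum_insert hk]
    have cross_nonneg : 0 ≤ f k * ∑ i ∈ s, f i :=
      mul_nonneg (hf k) (Finset.sum_nonneg fun i _ => hf i)
    calc 1 + (f k + ∑ i ∈ s, f i) ≤ 1 + (f k + ∑ i ∈ s, f i) + f k * ∑ i ∈ s, f i :=
          le_add_of_nonneg_right cross_nonneg
      _ = (1 + f k) * (1 + ∑ i ∈ s, f i) := by ring
      _ ≤ (1 + f k) * ∏ i ∈ s, (1 + f i) :=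
          mul_le_mul_of_nonneg_left ih (add_nonneg zero_le_one (hf k))

variable [Fintype ι] {θ : ι → ℝ}

lemma one_le_card_mul_sum_abs_cube_sq (hθ : ∑ k, θ k ^ 2 = 1) :
    1 ≤ (Fintype.card ι : ℝ) * (∑ k, |θ k| ^ 3) ^ 2 := by
  have sum_sq_le : (∑ k, θ k ^ 2) ^ 2 ≤ (∑ k, |θ k|) * ∑ k, |θ k| ^ 3 :=
    Finset.sum_sq_le_sum_mul_sum_of_sq_le_mul _ (fun i _ => abs_nonneg _)
      (fun i _ => by positivity) fun i _ => by rw [← sq_abs (θ i)]; exact le_of_eq (by ring)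
  have sum_abs_sq_le : (∑ k, |θ k|) ^ 2 ≤ (Fintype.card ι : ℝ) * ∑ k, θ k ^ 2 := by
    simpa only [sq_abs] using! sq_sum_le_card_mul_sum_sq (s := Finset.univ) (f := fun k => |θ k|)
  rw [hθ] at sum_sq_le sum_abs_sq_le
  calc (1 : ℝ) = (1 ^ 2) ^ 2 := by norm_num
    _ ≤ ((∑ k, |θ k|) * ∑ k, |θ k| ^ 3) ^ 2 := by gcongr
    _ = (∑ k, |θ k|) ^ 2 * (∑ k, |θ k| ^ 3) ^ 2 := mul_pow _ _ _
    _ ≤ (Fintype.card ι : ℝ) * (∑ k, |θ k| ^ 3) ^ 2 := by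
        gcongr
        linarith

lemma sum_abs_cube_pos (hθ : ∑ k, θ k ^ 2 = 1) : 0 < ∑ k, |θ k| ^ 3 := by
  refine (Finset.sum_nonneg fun i _ => by positivity).lt_of_ne fun h => ?_
  have := one_le_card_mul_sum_abs_cube_sq hθ
  norm_num [← h] at this

lemma abs_le_of_sum_abs_cube_le {r : ℝ} (hr : 0 ≤ r) (hθ : ∑ k, |θ k| ^ 3 ≤ r ^ 3) (k : ι) :
    |θ k| ≤ r :=
  le_of_pow_le_pow_left₀ three_ne_zero hr <|
    (Finset.single_le_sum (f := fun k => |θ k| ^ 3) (fun i _ => by positivity)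
      (Finset.mem_univ k)).trans hθ

lemma prod_exp_neg_sq_div_two_add (hθ : ∑ k, θ k ^ 2 = 1) (M t : ℝ) :
    ∏ k, exp (-(θ k * t) ^ 2 / 2 + M * |θ k * t| ^ 3)
      = exp (-t ^ 2 / 2 + M * (∑ k, |θ k| ^ 3) * |t| ^ 3) := by
  rw [← exp_sum]
  congr 1
  calc ∑ k, (-(θ k * t) ^ 2 / 2 + M * |θ k * t| ^ 3)
      = ∑ k, (θ k ^ 2 * (-t ^ 2 / 2) + |θ k| ^ 3 * (M * |t| ^ 3)) :=
        Finset.sum_congr rfl fun k _ => by rw [abs_mul]; ring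
    _ = (∑ k, θ k ^ 2) * (-t ^ 2 / 2) + (∑ k, |θ k| ^ 3) * (M * |t| ^ 3) := by
        rw [Finset.sum_add_distrib, Finset.sum_mul, Finset.sum_mul]
    _ = -t ^ 2 / 2 + M * (∑ k, |θ k| ^ 3) * |t| ^ 3 := by rw [hθ]; ring

lemma prod_exp_neg_sq_div_two (hθ : ∑ k, θ k ^ 2 = 1) (t : ℝ) :
    ∏ k, exp (-(θ k * t) ^ 2 / 2) = exp (-t ^ 2 / 2) := by
  simpa only [zero_mul, add_zero] using prod_exp_neg_sq_div_two_add hθ 0 t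

end ProductEstimates

section TaylorBound

variable {φ : ℝ → ℂ} {M : ℝ}

lemma norm_le_exp_of_taylor (hM : 1 / 2 ≤ M)
    (hφ : ∀ u, ‖φ u - (1 - u ^ 2 / 2 : ℝ)‖ ≤ M * |u| ^ 3) (hφ1 : ∀ u, ‖φ u‖ ≤ 1) (u : ℝ) :
    ‖φ u‖ ≤ exp (-u ^ 2 / 2 + M * |u| ^ 3) := by
  rcases le_total |u| 1 with small | large
  · have u_sq_le : u ^ 2 ≤ 1 := by rwa [sq_le_one_iff_abs_le_one]
    calc ‖φ u‖ ≤ ‖((1 - u ^ 2 / 2 : ℝ) : ℂ)‖ + ‖φ u - (1 - u ^ 2 / 2 : ℝ)‖ :=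
          norm_le_norm_add_norm_sub' _ _
      _ ≤ (1 - u ^ 2 / 2) + M * |u| ^ 3 := by
          rw [Complex.norm_real, norm_of_nonneg (by linarith)]
          gcongr
          exact hφ u
      _ ≤ exp (-u ^ 2 / 2 + M * |u| ^ 3) := by
          linarith [add_one_le_exp (-u ^ 2 / 2 + M * |u| ^ 3)]
  · refine (hφ1 u).trans (one_le_exp ?_)
    have sq_le_cube : u ^ 2 ≤ |u| ^ 3 := by
      rw [← sq_abs]
      exact pow_le_pow_right₀ large (by norm_num)
    nlinarith [sq_nonneg u]

lemma abs_exp_neg_sq_div_two_sub_le {u : ℝ} (hu : |u| ≤ 1) :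
    |exp (-u ^ 2 / 2) - (1 - u ^ 2 / 2)| ≤ |u| ^ 3 := by
  have u_sq_le : u ^ 2 ≤ 1 := by rwa [sq_le_one_iff_abs_le_one]
  calc |exp (-u ^ 2 / 2) - (1 - u ^ 2 / 2)| = |exp (-u ^ 2 / 2) - 1 - (-u ^ 2 / 2)| := by
        congr 1
        ring
    _ ≤ (-u ^ 2 / 2) ^ 2 := by
        refine abs_exp_sub_one_sub_id_le ?_
        rw [abs_le]
        constructor <;> nlinarith [sq_nonneg u]
    _ = |u| ^ 3 * (|u| / 4) := by
        rw [← sq_abs u]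
        ring
    _ ≤ |u| ^ 3 := mul_le_of_le_one_right (by positivity) (by linarith)

lemma norm_sub_exp_neg_sq_div_two_le (hM : 0 ≤ M)
    (hφ : ∀ u, ‖φ u - (1 - u ^ 2 / 2 : ℝ)‖ ≤ M * |u| ^ 3) (hφ1 : ∀ u, ‖φ u‖ ≤ 1) (u : ℝ) :
    ‖φ u - (exp (-u ^ 2 / 2) : ℝ)‖ ≤ (M + 2) * |u| ^ 3 := by
  rcases le_total |u| 1 with small | large
  · calc ‖φ u - (exp (-u ^ 2 / 2) : ℝ)‖
        ≤ ‖φ u - (1 - u ^ 2 / 2 : ℝ)‖ + ‖((1 - u ^ 2 / 2 : ℝ) : ℂ) - (exp (-u ^ 2 / 2) : ℝ)‖ :=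
          norm_sub_le_norm_sub_add_norm_sub _ _ _
      _ ≤ M * |u| ^ 3 + |u| ^ 3 := by
          rw [← Complex.ofReal_sub, Complex.norm_real, norm_eq_abs, abs_sub_comm]
          exact add_le_add (hφ u) (abs_exp_neg_sq_div_two_sub_le small)
      _ ≤ (M + 2) * |u| ^ 3 := by linarith [pow_nonneg (abs_nonneg u) 3]
  · have exp_le : exp (-u ^ 2 / 2) ≤ 1 := exp_le_one_iff.2 (by nlinarith [sq_nonneg u])
    calc ‖φ u - (exp (-u ^ 2 / 2) : ℝ)‖ ≤ 1 + 1 := by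
          refine (norm_sub_le _ _).trans (add_le_add (hφ1 u) ?_)
          rwa [Complex.norm_real, norm_of_nonneg (exp_pos _).le]
      _ ≤ (M + 2) * 1 := by linarith
      _ ≤ (M + 2) * |u| ^ 3 := by
          gcongr
          exact one_le_pow₀ large

lemma norm_sub_exp_div_exp_le (hM : 0 ≤ M)
    (hφ : ∀ u, ‖φ u - (1 - u ^ 2 / 2 : ℝ)‖ ≤ M * |u| ^ 3) (hφ1 : ∀ u, ‖φ u‖ ≤ 1) {a : ℝ}
    (ha : |a| ≤ 1 / 2) (t : ℝ) :
    ‖φ (a * t) - (exp (-(a * t) ^ 2 / 2) : ℝ)‖ / exp (-(a * t) ^ 2 / 2 + M * |a * t| ^ 3)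
      ≤ |a| ^ 3 * ((M + 2) * |t| ^ 3 * exp (t ^ 2 / 8)) := by
  have inv_le : (exp (-(a * t) ^ 2 / 2 + M * |a * t| ^ 3))⁻¹ ≤ exp (t ^ 2 / 8) := by
    rw [← exp_neg]
    have sq_le : (a * t) ^ 2 ≤ (1 / 2) ^ 2 * t ^ 2 := by
      rw [mul_pow, ← sq_abs a]
      gcongr
    have : 0 ≤ M * |a * t| ^ 3 := by positivity
    exact exp_le_exp.2 (by linarith)
  calc ‖φ (a * t) - (exp (-(a * t) ^ 2 / 2) : ℝ)‖ / exp (-(a * t) ^ 2 / 2 + M * |a * t| ^ 3)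
      ≤ (M + 2) * |a * t| ^ 3 * exp (t ^ 2 / 8) := by
        rw [div_eq_mul_inv]
        gcongr
        exact norm_sub_exp_neg_sq_div_two_le hM hφ hφ1 _
    _ = |a| ^ 3 * ((M + 2) * |t| ^ 3 * exp (t ^ 2 / 8)) := by
        rw [abs_mul]
        ring

variable {ι : Type*} [Fintype ι] {θ : ι → ℝ}

lemma norm_prod_sub_exp_le_of_small (hM : 1 / 2 ≤ M)
    (hφ : ∀ u, ‖φ u - (1 - u ^ 2 / 2 : ℝ)‖ ≤ M * |u| ^ 3) (hφ1 : ∀ u, ‖φ u‖ ≤ 1)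
    (hθ : ∑ k, θ k ^ 2 = 1) (hγ : ∑ k, |θ k| ^ 3 ≤ 1 / 8) {t : ℝ}
    (ht : M * (∑ k, |θ k| ^ 3) * |t| ≤ 1 / 8) :
    ‖∏ k, φ (θ k * t) - (exp (-t ^ 2 / 2) : ℝ)‖
      ≤ |t| * ((M + 2) * (∑ k, |θ k| ^ 3) * (t ^ 2 * exp (-(1 / 4) * t ^ 2))) := by
  have abs_θ_le : ∀ k, |θ k| ≤ 1 / 2 :=
    abs_le_of_sum_abs_cube_le (by norm_num) (hγ.trans_eq (by norm_num))
  set γ := ∑ k, |θ k| ^ 3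
  let d (k : ι) : ℝ := exp (-(θ k * t) ^ 2 / 2 + M * |θ k * t| ^ 3)
  have gaussian_le (k : ι) : ‖((exp (-(θ k * t) ^ 2 / 2) : ℝ) : ℂ)‖ ≤ d k := by
    rw [Complex.norm_real, norm_of_nonneg (exp_pos _).le]
    exact exp_le_exp.2 (le_add_of_nonneg_right (by positivity))
  calc ‖∏ k, φ (θ k * t) - (exp (-t ^ 2 / 2) : ℝ)‖
      ≤ (∏ k, d k) * ∑ k, ‖φ (θ k * t) - (exp (-(θ k * t) ^ 2 / 2) : ℝ)‖ / d k := by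
        rw [← prod_exp_neg_sq_div_two hθ, Complex.ofReal_prod]
        exact norm_prod_sub_prod_le _ (fun k => exp_pos _)
          (fun k => norm_le_exp_of_taylor hM hφ hφ1 _) gaussian_le
    _ ≤ exp (-t ^ 2 / 2 + M * γ * |t| ^ 3) * (γ * ((M + 2) * |t| ^ 3 * exp (t ^ 2 / 8))) := by
        rw [← prod_exp_neg_sq_div_two_add hθ, Finset.sum_mul]
        gcongr with k
        exact norm_sub_exp_div_exp_le (by linarith) hφ hφ1 (abs_θ_le k) t
    _ = (M + 2) * γ * |t| ^ 3 * exp (-t ^ 2 / 2 + M * γ * |t| * t ^ 2 + t ^ 2 / 8) := by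
        rw [exp_add _ (t ^ 2 / 8), ← sq_abs t]
        ring_nf
    _ ≤ (M + 2) * γ * |t| ^ 3 * exp (-(1 / 4) * t ^ 2) := by
        have : M * γ * |t| * t ^ 2 ≤ 1 / 8 * t ^ 2 := by gcongr
        gcongr
        linarith
    _ = |t| * ((M + 2) * γ * (t ^ 2 * exp (-(1 / 4) * t ^ 2))) := by
        rw [← sq_abs t]
        ring

end TaylorBound

section Majorant

variable {φ : ℝ → ℂ} {M A : ℝ} {ι : Type*} [Fintype ι] {θ : ι → ℝ}

lemma norm_prod_mul_abs_le {c : ℝ} (hc : 0 < c)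
    (hdecay : ∀ u, ‖φ u‖ ^ 2 * (1 + c * u ^ 2) ≤ 1) (hθ : ∑ k, θ k ^ 2 = 1) (t : ℝ) :
    ‖∏ k, φ (θ k * t)‖ * |t| ≤ (√c)⁻¹ := by
  have sum_eq : ∑ k, c * (θ k * t) ^ 2 = c * t ^ 2 := by
    simp only [mul_pow, ← Finset.mul_sum, ← Finset.sum_mul, hθ, one_mul]
  have sq_le : ‖∏ k, φ (θ k * t)‖ ^ 2 * (c * t ^ 2) ≤ 1 :=
    calc ‖∏ k, φ (θ k * t)‖ ^ 2 * (c * t ^ 2)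
        ≤ ‖∏ k, φ (θ k * t)‖ ^ 2 * (1 + ∑ k, c * (θ k * t) ^ 2) := by
          rw [sum_eq]
          gcongr
          linarith
      _ ≤ ‖∏ k, φ (θ k * t)‖ ^ 2 * ∏ k, (1 + c * (θ k * t) ^ 2) := by
          gcongr
          exact one_add_sum_le_prod_one_add _ fun k => by positivity
      _ = ∏ k, ‖φ (θ k * t)‖ ^ 2 * (1 + c * (θ k * t) ^ 2) := by
          rw [norm_prod, ← Finset.prod_pow, Finset.prod_mul_distrib]
      _ ≤ 1 := Finset.prod_le_one (fun k _ => by positivity) fun k _ => hdecay _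
  refine le_of_sq_le_sq ?_ (by positivity)
  rw [inv_pow, sq_sqrt hc.le, mul_pow, sq_abs, ← one_div, le_div_iff₀ hc]
  linarith

lemma norm_prod_sub_exp_mul_abs_le {c : ℝ} (hc : 0 < c)
    (hdecay : ∀ u, ‖φ u‖ ^ 2 * (1 + c * u ^ 2) ≤ 1) (hθ : ∑ k, θ k ^ 2 = 1) (t : ℝ) :
    ‖∏ k, φ (θ k * t) - (exp (-t ^ 2 / 2) : ℝ)‖ * |t| ≤ (√c)⁻¹ + 1 :=
  calc ‖∏ k, φ (θ k * t) - (exp (-t ^ 2 / 2) : ℝ)‖ * |t|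
      ≤ (‖∏ k, φ (θ k * t)‖ + exp (-t ^ 2 / 2)) * |t| := by
        gcongr
        refine (norm_sub_le _ _).trans_eq ?_
        rw [Complex.norm_real, norm_of_nonneg (exp_pos _).le]
    _ = ‖∏ k, φ (θ k * t)‖ * |t| + |t| * exp (-t ^ 2 / 2) := by ring
    _ ≤ (√c)⁻¹ + 1 :=
        add_le_add (norm_prod_mul_abs_le hc hdecay hθ t) (abs_mul_exp_neg_sq_div_two_le_one t)

/-- An integrable majorant of `t ↦ ‖φ t - exp (-t² / 2)‖ / |t|`, where `φ` is the characteristic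
function of a linear form whose coefficients have third absolute moment `γ`. The Gaussian term
controls `|t| ≤ 1 / (8 M γ)` and the Cauchy density, of width `1 / (8 M γ)`, all larger `t`. -/
noncomputable def esseenMajorant (M A γ t : ℝ) : ℝ :=
  (M + 2) * γ * (t ^ 2 * exp (-(1 / 4) * t ^ 2))
    + 2 * A * (8 * M * γ) ^ 2 * (1 + (8 * M * γ * t) ^ 2)⁻¹

lemma esseenMajorant_nonneg {γ : ℝ} (hM : 0 ≤ M) (hA : 0 ≤ A) (hγ : 0 ≤ γ) (t : ℝ) :
    0 ≤ esseenMajorant M A γ t := by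
  unfold esseenMajorant
  positivity

lemma integrable_sq_mul_exp_neg_sq : Integrable fun t : ℝ => t ^ 2 * exp (-(1 / 4) * t ^ 2) := by
  simpa only [rpow_two] using
    integrable_rpow_mul_exp_neg_mul_sq (b := 1 / 4) (by norm_num) (s := 2) (by norm_num)

lemma integrable_inv_one_add_mul_sq {S : ℝ} (hS : S ≠ 0) :
    Integrable fun t : ℝ => (1 + (S * t) ^ 2)⁻¹ :=
  integrable_inv_one_add_sq.comp_mul_left' hS

lemma integrable_esseenMajorant {γ : ℝ} (hM : M ≠ 0) (hγ : γ ≠ 0) :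
    Integrable (esseenMajorant M A γ) :=
  (integrable_sq_mul_exp_neg_sq.const_mul _).add
    ((integrable_inv_one_add_mul_sq (by simp [hM, hγ])).const_mul _)

lemma integral_esseenMajorant {γ : ℝ} (hM : 0 < M) (hγ : 0 < γ) :
    ∫ t, esseenMajorant M A γ t
      = ((M + 2) * (∫ t : ℝ, t ^ 2 * exp (-(1 / 4) * t ^ 2)) + 16 * M * A * π) * γ := by
  have hS : 0 < 8 * M * γ := by positivity
  unfold esseenMajorant
  rw [integral_add (integrable_sq_mul_exp_neg_sq.const_mul _)
      ((integrable_inv_one_add_mul_sq hS.ne').const_mul _),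
    integral_const_mul, integral_const_mul,
    Measure.integral_comp_mul_left (fun x : ℝ => (1 + x ^ 2)⁻¹), integral_univ_inv_one_add_sq,
    abs_of_pos (inv_pos.2 hS), smul_eq_mul]
  field

lemma div_abs_le_abs_mul_inv_one_add_sq {S t : ℝ} (hA : 0 ≤ A) (hS : 1 ≤ S * |t|) :
    A / |t| ≤ |t| * (2 * A * S ^ 2 * (1 + (S * t) ^ 2)⁻¹) := by
  have ht : 0 < |t| := abs_pos.2 fun h => by norm_num [h] at hS
  have one_le : 1 ≤ (S * t) ^ 2 := by
    rw [mul_pow, ← sq_abs t, ← mul_pow]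
    exact one_le_pow₀ hS
  rw [div_le_iff₀ ht]
  calc A ≤ A * (2 * (S * t) ^ 2 / (1 + (S * t) ^ 2)) :=
        le_mul_of_one_le_right hA <| by rw [le_div_iff₀ (by positivity)]; linarith
    _ = |t| * (2 * A * S ^ 2 * (1 + (S * t) ^ 2)⁻¹) * |t| := by
        rw [mul_pow, ← sq_abs t]
        ring

lemma norm_prod_sub_exp_le_esseenMajorant {c : ℝ} (hM : 1 / 2 ≤ M) (hc : 0 < c)
    (hφ : ∀ u, ‖φ u - (1 - u ^ 2 / 2 : ℝ)‖ ≤ M * |u| ^ 3) (hφ1 : ∀ u, ‖φ u‖ ≤ 1)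
    (hdecay : ∀ u, ‖φ u‖ ^ 2 * (1 + c * u ^ 2) ≤ 1) (hθ : ∑ k, θ k ^ 2 = 1)
    (hγ : ∑ k, |θ k| ^ 3 ≤ 1 / 8) (t : ℝ) :
    ‖∏ k, φ (θ k * t) - (exp (-t ^ 2 / 2) : ℝ)‖
      ≤ |t| * esseenMajorant M ((√c)⁻¹ + 1) (∑ k, |θ k| ^ 3) t := by
  have γ_pos := sum_abs_cube_pos hθ
  rw [esseenMajorant, mul_add]
  rcases le_total (8 * M * (∑ k, |θ k| ^ 3) * |t|) 1 with low | high
  · refine (norm_prod_sub_exp_le_of_small hM hφ hφ1 hθ hγ (by linarith)).trans ?_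
    exact le_add_of_nonneg_right (by positivity)
  · have ht : 0 < |t| := abs_pos.2 fun h => by norm_num [h] at high
    calc ‖∏ k, φ (θ k * t) - (exp (-t ^ 2 / 2) : ℝ)‖ ≤ ((√c)⁻¹ + 1) / |t| := by
          rw [le_div_iff₀ ht]
          exact norm_prod_sub_exp_mul_abs_le hc hdecay hθ t
      _ ≤ _ := div_abs_le_abs_mul_inv_one_add_sq (by positivity) high
      _ ≤ _ := le_add_of_nonneg_left (by positivity)

end Majorant

section BerryEsseen

lemma norm_exp_mul_I_sub_le (x : ℝ) :
    ‖Complex.exp (x * Complex.I) - ((1 - x ^ 2 / 2 : ℝ) + x * Complex.I)‖ ≤ 4 * |x| ^ 3 := by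
  rcases le_total |x| 1 with small | large
  · have norm_arg : ‖x * Complex.I‖ = |x| := by simp
    have taylor := Complex.exp_bound (norm_arg.trans_le small) (n := 3) (by norm_num)
    have sum_eq : ∑ m ∈ Finset.range 3, (x * Complex.I) ^ m / (m.factorial : ℂ)
        = (1 - x ^ 2 / 2 : ℝ) + x * Complex.I := by
      simp only [Finset.sum_range_succ, Finset.sum_range_zero, Nat.factorial, mul_pow,
        Complex.I_sq]
      push_cast
      ring
    rw [sum_eq, norm_arg] at taylor
    refine taylor.trans ?_
    norm_num [Nat.factorial]
    linarith [pow_nonneg (abs_nonneg x) 3]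
  · have le_cube : |x| ≤ |x| ^ 3 := le_self_pow₀ large (by norm_num)
    have sq_le_cube : |x| ^ 2 ≤ |x| ^ 3 := pow_le_pow_right₀ large (by norm_num)
    have : 1 ≤ |x| ^ 3 := one_le_pow₀ large
    have norm_real_le : ‖((1 - x ^ 2 / 2 : ℝ) : ℂ)‖ ≤ 1 + |x| ^ 2 / 2 := by
      rw [Complex.norm_real, norm_eq_abs, sq_abs, abs_le]
      constructor <;> linarith [sq_nonneg x]
    calc ‖Complex.exp (x * Complex.I) - ((1 - x ^ 2 / 2 : ℝ) + x * Complex.I)‖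
        ≤ ‖Complex.exp (x * Complex.I)‖ + (‖((1 - x ^ 2 / 2 : ℝ) : ℂ)‖ + ‖x * Complex.I‖) :=
          (norm_sub_le _ _).trans <| add_le_add_right (norm_add_le _ _) _
      _ ≤ 1 + (1 + |x| ^ 2 / 2 + |x|) := by
          rw [Complex.norm_exp_ofReal_mul_I, norm_mul, Complex.norm_I, mul_one,
            Complex.norm_real x, norm_eq_abs]
          gcongr
      _ ≤ 4 * |x| ^ 3 := by linarith

variable {μ : Measure ℝ} [IsProbabilityMeasure μ]

lemma integrable_pow_of_integrable_abs_cube (h3 : Integrable (fun x => |x| ^ 3) μ) {k : ℕ}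
    (hk : k ≤ 3) : Integrable (fun x => x ^ k) μ := by
  refine ((integrable_const 1).add h3).mono' (by fun_prop) (ae_of_all _ fun x => ?_)
  rw [norm_pow, norm_eq_abs, Pi.add_apply]
  rcases le_total |x| 1 with small | large
  · linarith [pow_le_one₀ (n := k) (abs_nonneg x) small, pow_nonneg (abs_nonneg x) 3]
  · linarith [pow_le_pow_right₀ large hk]

lemma integrable_id_of_integrable_abs_cube (h3 : Integrable (fun x => |x| ^ 3) μ) :
    Integrable id μ := by
  simpa only [pow_one] using! integrable_pow_of_integrable_abs_cube h3 (k := 1) (by norm_num)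

lemma norm_charFun_sub_le (h3 : Integrable (fun x => |x| ^ 3) μ) (hmean : ∫ x, x ∂μ = 0)
    (hvar : ∫ x, x ^ 2 ∂μ = 1) (u : ℝ) :
    ‖charFun μ u - (1 - u ^ 2 / 2 : ℝ)‖ ≤ 4 * (∫ x, |x| ^ 3 ∂μ) * |u| ^ 3 := by
  have integrable_sq : Integrable (fun x => u ^ 2 * x ^ 2 / 2) μ :=
    ((integrable_pow_of_integrable_abs_cube h3 (by norm_num)).const_mul _).div_const 2
  have integrable_re : Integrable (fun x : ℝ => ((1 - (u * x) ^ 2 / 2 : ℝ) : ℂ)) μ := by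
    simp only [mul_pow]
    exact ((integrable_const 1).sub integrable_sq).ofReal
  have integrable_im : Integrable (fun x : ℝ => ((u * x : ℝ) : ℂ) * Complex.I) μ :=
    ((integrable_id_of_integrable_abs_cube h3).const_mul u).ofReal.mul_const _
  have integral_re : ∫ x : ℝ, ((1 - (u * x) ^ 2 / 2 : ℝ) : ℂ) ∂μ = (1 - u ^ 2 / 2 : ℝ) := by
    simp only [mul_pow]
    rw [integral_complex_ofReal, integral_sub (integrable_const 1) integrable_sq, integral_div,
      integral_const_mul, hvar]
    simp
  have integral_im : ∫ x : ℝ, ((u * x : ℝ) : ℂ) * Complex.I ∂μ = 0 := by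
    rw [integral_mul_const, integral_complex_ofReal, integral_const_mul, hmean]
    simp
  have integrable_exp : Integrable (fun x : ℝ => Complex.exp ((u * x : ℝ) * Complex.I)) μ := by
    simpa only [Complex.ofReal_mul] using integrable_exp_mul_I μ u
  have sub_eq : charFun μ u - (1 - u ^ 2 / 2 : ℝ) = ∫ x : ℝ, (Complex.exp ((u * x : ℝ) * Complex.I)
      - ((1 - (u * x) ^ 2 / 2 : ℝ) + ((u * x : ℝ) : ℂ) * Complex.I)) ∂μ := by
    rw [integral_sub integrable_exp (integrable_re.fun_add integrable_im),
      integral_add integrable_re integrable_im, integral_re, integral_im, add_zero,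
      charFun_apply_real]
    simp only [Complex.ofReal_mul]
  calc ‖charFun μ u - (1 - u ^ 2 / 2 : ℝ)‖ ≤ ∫ x, 4 * |u * x| ^ 3 ∂μ := by
        rw [sub_eq]
        refine norm_integral_le_of_norm_le ?_ (ae_of_all _ fun x => norm_exp_mul_I_sub_le (u * x))
        simp only [abs_mul, mul_pow]
        exact (h3.const_mul _).const_mul _
    _ = 4 * (∫ x, |x| ^ 3 ∂μ) * |u| ^ 3 := by
        simp only [abs_mul, mul_pow, integral_const_mul]
        ring

lemma charFun_gaussianReal_zero_one (t : ℝ) :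
    charFun (gaussianReal 0 1) t = (exp (-t ^ 2 / 2) : ℝ) := by
  simp [charFun_gaussianReal, neg_div]

variable {ι : Type*} [Fintype ι]

lemma aemeasurable_linearForm (θ : ι → ℝ) (ρ : Measure (ι → ℝ)) :
    AEMeasurable (fun x => ∑ k, θ k * x k) ρ :=
  Measurable.aemeasurable (by fun_prop)

lemma charFun_map_linearForm_pi (θ : ι → ℝ) (t : ℝ) :
    charFun ((Measure.pi fun _ : ι => μ).map fun x => ∑ k, θ k * x k) t
      = ∏ k, charFun μ (θ k * t) := by
  simp only [charFun_apply_real]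
  rw [integral_map (aemeasurable_linearForm θ _) (by fun_prop), ← integral_fintype_prod_eq_prod]
  refine integral_congr_ae (ae_of_all _ fun x => ?_)
  simp only [← Complex.exp_sum]
  congr 1
  push_cast
  rw [Finset.mul_sum, Finset.sum_mul]
  exact Finset.sum_congr rfl fun k _ => by ring

lemma integrable_id_map_linearForm_pi (hμ : Integrable id μ) (θ : ι → ℝ) :
    Integrable id ((Measure.pi fun _ : ι => μ).map fun x => ∑ k, θ k * x k) := by
  rw [integrable_map_measure (by fun_prop) (aemeasurable_linearForm θ _)]
  exact integrable_finsetSum _ fun k _ =>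
    (integrable_comp_eval (μ := fun _ => μ) (f := id) hμ).const_mul (θ k)

theorem exists_abs_cdf_linearForm_sub_gaussian_le {c : ℝ} (hc : 0 < c)
    (h3 : Integrable (fun x => |x| ^ 3) μ) (hmean : ∫ x, x ∂μ = 0) (hvar : ∫ x, x ^ 2 ∂μ = 1)
    (hdecay : ∀ u, ‖charFun μ u‖ ^ 2 * (1 + c * u ^ 2) ≤ 1) :
    ∃ C > 0, ∀ {ι : Type*} [Fintype ι] {θ : ι → ℝ}, ∑ k, θ k ^ 2 = 1 → ∀ t,
      |cdf ((Measure.pi fun _ : ι => μ).map fun x => ∑ k, θ k * x k) t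
          - cdf (gaussianReal 0 1) t| ≤ C * ∑ k, |θ k| ^ 3 := by
  set M := 4 * (∫ x, |x| ^ 3 ∂μ) + 1 / 2 with M_def
  have moment_nonneg : 0 ≤ ∫ x, |x| ^ 3 ∂μ := integral_nonneg fun x => by positivity
  have half_le_M : 1 / 2 ≤ M := by linarith
  have taylor (u : ℝ) : ‖charFun μ u - (1 - u ^ 2 / 2 : ℝ)‖ ≤ M * |u| ^ 3 :=
    (norm_charFun_sub_le h3 hmean hvar u).trans (by gcongr; linarith)
  have : 0 ≤ ∫ t : ℝ, t ^ 2 * exp (-(1 / 4) * t ^ 2) :=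
    integral_nonneg fun t => by positivity
  set C := (M + 2) * (∫ t : ℝ, t ^ 2 * exp (-(1 / 4) * t ^ 2)) + 16 * M * ((√c)⁻¹ + 1) * π
  refine ⟨C + 8, by positivity, fun {ι _ θ} hθ t => ?_⟩
  have γ_pos := sum_abs_cube_pos hθ
  rcases le_total (1 / 8) (∑ k, |θ k| ^ 3) with large | small
  · have : 0 ≤ C * ∑ k, |θ k| ^ 3 := by positivity
    linarith [abs_cdf_sub_cdf_le_one
      ((Measure.pi fun _ : ι => μ).map fun x => ∑ k, θ k * x k) (gaussianReal 0 1) t t]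
  have : IsProbabilityMeasure ((Measure.pi fun _ : ι => μ).map fun x => ∑ k, θ k * x k) :=
    Measure.isProbabilityMeasure_map (aemeasurable_linearForm θ _)
  calc _ ≤ ∫ t, esseenMajorant M ((√c)⁻¹ + 1) (∑ k, |θ k| ^ 3) t := by
        refine abs_cdf_sub_cdf_le_integral (integrable_id_map_linearForm_pi
            (integrable_id_of_integrable_abs_cube h3) θ)
          (memLp_id_gaussianReal 1 |>.integrable le_rfl)
          (integrable_esseenMajorant (by positivity) γ_pos.ne')
          (esseenMajorant_nonneg (by positivity) (by positivity) γ_pos.le) (fun t => ?_) t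
        rw [charFun_map_linearForm_pi, charFun_gaussianReal_zero_one]
        exact norm_prod_sub_exp_le_esseenMajorant half_le_M hc taylor
          (fun u => norm_charFun_le_one u) hdecay hθ small t
    _ = C * ∑ k, |θ k| ^ 3 := integral_esseenMajorant (by positivity) γ_pos
    _ ≤ (C + 8) * ∑ k, |θ k| ^ 3 := by gcongr; linarith

end BerryEsseen

section CharFunDecay

variable {μ : Measure ℝ} [IsProbabilityMeasure μ]

lemma one_sub_re_charFun_two_mul_le (u : ℝ) :
    1 - (charFun μ (2 * u)).re ≤ 4 * (1 - (charFun μ u).re) := by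
  have re_exp (v x : ℝ) : (Complex.exp (v * x * Complex.I)).re = cos (v * x) := by
    rw [← Complex.ofReal_mul, Complex.exp_ofReal_mul_I_re]
  have integrable_cos (v : ℝ) : Integrable (fun x => cos (v * x)) μ := by
    simpa only [RCLike.re_eq_complex_re, re_exp] using (integrable_exp_mul_I μ v).re
  have re_charFun (v : ℝ) : (charFun μ v).re = ∫ x, cos (v * x) ∂μ := by
    rw [charFun_apply_real, ← RCLike.re_eq_complex_re, ← integral_re (integrable_exp_mul_I μ v)]
    simp only [RCLike.re_eq_complex_re, re_exp]
  have integral_le : ∫ x, (4 * cos (u * x) - 3) ∂μ ≤ ∫ x, cos (2 * u * x) ∂μ := by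
    refine integral_mono (((integrable_cos u).const_mul 4).sub (integrable_const _))
      (integrable_cos _) fun x => ?_
    simp only [mul_assoc 2 u x, cos_two_mul]
    nlinarith [sq_nonneg (cos (u * x) - 1)]
  rw [integral_sub ((integrable_cos u).const_mul 4) (integrable_const _), integral_const_mul,
    integral_const, probReal_univ, one_smul] at integral_le
  rw [re_charFun, re_charFun]
  linarith

-- `‖charFun μ u‖ ^ 2` is the characteristic function of the difference of two independent copies.
lemma one_sub_norm_charFun_two_mul_sq_le (u : ℝ) :
    1 - ‖charFun μ (2 * u)‖ ^ 2 ≤ 4 * (1 - ‖charFun μ u‖ ^ 2) := by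
  have : IsProbabilityMeasure (μ.map (-1 * ·)) :=
    Measure.isProbabilityMeasure_map (by fun_prop)
  have re_charFun_symm (v : ℝ) :
      (charFun (μ ∗ μ.map (-1 * ·)) v).re = ‖charFun μ v‖ ^ 2 := by
    rw [charFun_conv, charFun_map_mul, neg_one_mul, charFun_neg, Complex.mul_conj,
      Complex.normSq_eq_norm_sq, Complex.ofReal_re]
  simpa only [re_charFun_symm] using
    one_sub_re_charFun_two_mul_le (μ := μ ∗ μ.map (-1 * ·)) u

lemma one_sub_norm_charFun_two_pow_mul_sq_le (u : ℝ) (m : ℕ) :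
    1 - ‖charFun μ (2 ^ m * u)‖ ^ 2 ≤ 4 ^ m * (1 - ‖charFun μ u‖ ^ 2) := by
  induction m with
  | zero => simp
  | succ m ih =>
    rw [pow_succ' (2 : ℝ), mul_assoc, pow_succ' (4 : ℝ)]
    linarith [one_sub_norm_charFun_two_mul_sq_le (μ := μ) (2 ^ m * u)]

variable {A : ℝ}

lemma sq_div_le_one_sub_norm_charFun_sq (hA : 0 < A) (h : ∀ u, ‖charFun μ u‖ * |u| ≤ A) {u : ℝ}
    (hu : |u| ≤ 4 * A) : u ^ 2 / (32 * A ^ 2) ≤ 1 - ‖charFun μ u‖ ^ 2 := by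
  rcases eq_or_ne u 0 with rfl | hu0
  · simp
  have abs_u_pos : 0 < |u| := abs_pos.2 hu0
  obtain ⟨m, le_four_A, four_A_lt⟩ := exists_nat_pow_near (x := 4 * A / |u|) (y := 2)
    (by rwa [le_div_iff₀ abs_u_pos, one_mul]) one_lt_two
  rw [le_div_iff₀ abs_u_pos] at le_four_A
  rw [div_lt_iff₀ abs_u_pos, pow_succ'] at four_A_lt
  have abs_eq : |2 ^ m * u| = 2 ^ m * |u| := by rw [abs_mul, abs_of_pos (by positivity)]
  have norm_le_half : ‖charFun μ (2 ^ m * u)‖ ≤ 1 / 2 := by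
    have := h (2 ^ m * u)
    rw [abs_eq] at this
    by_contra! half_lt
    nlinarith
  have half_le : 1 / 2 ≤ 4 ^ m * (1 - ‖charFun μ u‖ ^ 2) := by
    refine le_trans ?_ (one_sub_norm_charFun_two_pow_mul_sq_le u m)
    nlinarith [norm_nonneg (charFun μ (2 ^ m * u))]
  have four_pow_mul_le : 4 ^ m * u ^ 2 ≤ 16 * A ^ 2 :=
    calc (4 : ℝ) ^ m * u ^ 2 = (2 ^ m * |u|) ^ 2 := by
          rw [mul_pow, sq_abs, ← pow_mul, mul_comm m 2, pow_mul]
          norm_num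
      _ ≤ (4 * A) ^ 2 := by gcongr
      _ = 16 * A ^ 2 := by ring
  refine le_of_mul_le_mul_left ?_ (pow_pos four_pos m)
  calc 4 ^ m * (u ^ 2 / (32 * A ^ 2)) = 4 ^ m * u ^ 2 / (32 * A ^ 2) := by ring
    _ ≤ 1 / 2 := by
        rw [div_le_iff₀ (by positivity)]
        linarith
    _ ≤ 4 ^ m * (1 - ‖charFun μ u‖ ^ 2) := half_le

theorem norm_charFun_sq_mul_le_one (hA : 0 < A) (h : ∀ u, ‖charFun μ u‖ * |u| ≤ A) (u : ℝ) :
    ‖charFun μ u‖ ^ 2 * (1 + (32 * A ^ 2)⁻¹ * u ^ 2) ≤ 1 := by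
  rcases le_total |u| (4 * A) with small | large
  · have norm_sq_le := sq_div_le_one_sub_norm_charFun_sq hA h small
    rw [div_eq_inv_mul] at norm_sq_le
    set q := (32 * A ^ 2)⁻¹ * u ^ 2
    calc ‖charFun μ u‖ ^ 2 * (1 + q) ≤ (1 - q) * (1 + q) := by
          gcongr
          linarith
      _ ≤ 1 := by linarith [sq_nonneg q]
  · have norm_le : ‖charFun μ u‖ ≤ 1 / 4 := by
      by_contra! lt_norm
      nlinarith [h u]
    have mul_sq_le : ‖charFun μ u‖ ^ 2 * u ^ 2 ≤ A ^ 2 := by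
      rw [← sq_abs u, ← mul_pow]
      exact pow_le_pow_left₀ (by positivity) (h u) 2
    calc ‖charFun μ u‖ ^ 2 * (1 + (32 * A ^ 2)⁻¹ * u ^ 2)
        = ‖charFun μ u‖ ^ 2 + ‖charFun μ u‖ ^ 2 * u ^ 2 / (32 * A ^ 2) := by ring
      _ ≤ (1 / 4) ^ 2 + A ^ 2 / (32 * A ^ 2) := by gcongr
      _ ≤ 1 := by
          rw [div_mul_cancel_right₀ (by positivity)]
          norm_num

end CharFunDecay

section GammaMoments

variable {a β : ℝ}

lemma measurable_gammaPDF (a β : ℝ) : Measurable (gammaPDF a β) :=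
  (measurable_gammaPDFReal a β).ennreal_ofReal

lemma gammaPDFReal_mul_rpow {q r : ℝ} (ha : 0 < a) (haq : 0 < a + q) (hβ : 0 < β) (hr : 0 < r) :
    gammaPDFReal a β r * r ^ q
      = Gamma (a + q) / (Gamma a * β ^ q) * gammaPDFReal (a + q) β r := by
  have := Gamma_pos_of_pos ha
  have := Gamma_pos_of_pos haq
  rw [gammaPDFReal, gammaPDFReal, if_pos hr.le, if_pos hr.le, rpow_add hβ, add_sub_right_comm,
    rpow_add hr]
  field

lemma integral_gammaPDFReal_eq_one (ha : 0 < a) (hβ : 0 < β) : ∫ r, gammaPDFReal a β r = 1 := by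
  rw [integral_eq_lintegral_of_nonneg_ae (ae_of_all _ (gammaPDFReal_nonneg ha hβ))
    (stronglyMeasurable_gammaPDFReal a β).aestronglyMeasurable]
  exact (congrArg ENNReal.toReal (lintegral_gammaPDF_eq_one ha hβ)).trans ENNReal.toReal_one

lemma ae_gammaMeasure_pos (a β : ℝ) : ∀ᵐ r ∂gammaMeasure a β, 0 < r := by
  have ne_zero : ∀ᵐ r ∂gammaMeasure a β, r ≠ 0 :=
    (withDensity_absolutelyContinuous _ _).ae_le (Measure.ae_ne volume 0)
  have not_neg : ∀ᵐ r ∂gammaMeasure a β, ¬ r < 0 := by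
    rw [gammaMeasure, ae_withDensity_iff (measurable_gammaPDF a β)]
    exact ae_of_all _ fun r hr neg => hr (gammaPDF_of_neg neg)
  filter_upwards [ne_zero, not_neg] with r h0 h1 using lt_of_le_of_ne (not_lt.1 h1) h0.symm

lemma integral_rpow_gammaMeasure {q : ℝ} (ha : 0 < a) (haq : 0 < a + q) (hβ : 0 < β) :
    ∫ r, r ^ q ∂gammaMeasure a β = Gamma (a + q) / (Gamma a * β ^ q) := by
  rw [gammaMeasure, integral_withDensity_eq_integral_toReal_smul
    (measurable_gammaPDF a β) (ae_of_all _ fun r => ENNReal.ofReal_lt_top)]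
  calc ∫ r, (gammaPDF a β r).toReal • r ^ q
    _ = ∫ r, Gamma (a + q) / (Gamma a * β ^ q) * gammaPDFReal (a + q) β r := by
      refine integral_congr_ae ?_
      filter_upwards [Measure.ae_ne volume 0] with r hr0
      rw [gammaPDF, ENNReal.toReal_ofReal (gammaPDFReal_nonneg ha hβ r), smul_eq_mul]
      rcases hr0.lt_or_gt with neg | pos
      · simp [gammaPDFReal, neg.not_ge]
      · exact gammaPDFReal_mul_rpow ha haq hβ pos
    _ = Gamma (a + q) / (Gamma a * β ^ q) := by
      rw [integral_const_mul, integral_gammaPDFReal_eq_one haq hβ, mul_one]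

lemma integrable_rpow_gammaMeasure {q : ℝ} (ha : 0 < a) (haq : 0 < a + q) (hβ : 0 < β) :
    Integrable (fun r => r ^ q) (gammaMeasure a β) := by
  refine Integrable.of_integral_ne_zero ?_
  rw [integral_rpow_gammaMeasure ha haq hβ]
  have := Gamma_pos_of_pos ha
  have := Gamma_pos_of_pos haq
  positivity

lemma log_Gamma_add_one_sub {x : ℝ} (hx : 0 < x) : log (Gamma (x + 1)) - log (Gamma x) = log x := by
  rw [Gamma_add_one hx.ne', log_mul hx.ne' (Gamma_pos_of_pos hx).ne', add_sub_cancel_right]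

lemma log_Gamma_add_sub_le {x h : ℝ} (hx : 0 < x) (hh : 0 < h) :
    log (Gamma (x + h)) - log (Gamma x) ≤ h * log (x + h) := by
  have slope_le := convexOn_log_Gamma.slope_mono_adjacent (x := x) (y := x + h) (z := x + h + 1)
    hx (Set.mem_Ioi.2 (by linarith)) (by linarith) (by linarith)
  simp only [Function.comp_apply] at slope_le
  rwa [log_Gamma_add_one_sub (by linarith), add_sub_cancel_left, add_sub_cancel_left, div_one,
    div_le_iff₀' hh] at slope_le

lemma mul_log_le_log_Gamma_add_sub {x h : ℝ} (hx : 1 < x) (hh : 0 < h) :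
    h * log (x - 1) ≤ log (Gamma (x + h)) - log (Gamma x) := by
  have slope_le := convexOn_log_Gamma.slope_mono_adjacent (x := x - 1) (y := x) (z := x + h)
    (Set.mem_Ioi.2 (by linarith)) (Set.mem_Ioi.2 (by linarith)) (by linarith) (by linarith)
  have step := log_Gamma_add_one_sub (sub_pos.2 hx)
  rw [sub_add_cancel] at step
  simp only [Function.comp_apply] at slope_le
  rwa [step, add_sub_cancel_left, sub_sub_cancel, div_one, le_div_iff₀' hh] at slope_le

lemma Gamma_add_two_mul_mul_Gamma_le {h : ℝ} (ha : 1 < a) (hh : 0 < h) :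
    Gamma (a + 2 * h) * Gamma a ≤ Gamma (a + h) ^ 2 * exp (h * ((2 * h + 1) / (a - 1))) := by
  have upper := log_Gamma_add_sub_le (x := a + h) (by linarith) hh
  have lower := mul_log_le_log_Gamma_add_sub ha hh
  rw [add_assoc, ← two_mul] at upper
  have log_ratio : log (a + 2 * h) - log (a - 1) ≤ (2 * h + 1) / (a - 1) := by
    rw [← log_div (by linarith) (by linarith)]
    refine (log_le_sub_one_of_pos (div_pos (by linarith) (by linarith))).trans_eq ?_
    have : a - 1 ≠ 0 := by linarith
    field
  have h_log_ratio := mul_le_mul_of_nonneg_left log_ratio hh.le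
  have := Gamma_pos_of_pos (show 0 < a by linarith)
  have := Gamma_pos_of_pos (show 0 < a + h by linarith)
  have := Gamma_pos_of_pos (show 0 < a + 2 * h by linarith)
  rw [← log_le_log_iff (by positivity) (by positivity), log_mul (by positivity) (by positivity),
    log_mul (by positivity) (by positivity), log_exp, log_pow]
  push_cast
  linarith

lemma integral_rpow_two_mul_gammaMeasure_le {h : ℝ} (ha : 1 < a) (hβ : 0 < β) (hh : 0 < h) :
    ∫ r, r ^ (2 * h) ∂gammaMeasure a β
      ≤ (∫ r, r ^ h ∂gammaMeasure a β) ^ 2 * exp (h * ((2 * h + 1) / (a - 1))) := by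
  have := Gamma_pos_of_pos (show 0 < a by linarith)
  rw [integral_rpow_gammaMeasure (by linarith) (by linarith) hβ,
    integral_rpow_gammaMeasure (by linarith) (by linarith) hβ, two_mul h, rpow_add hβ, ← two_mul,
    div_pow, div_mul_eq_mul_div, div_le_div_iff₀ (by positivity) (by positivity)]
  calc Gamma (a + 2 * h) * (Gamma a * β ^ h) ^ 2
    _ = Gamma (a + 2 * h) * Gamma a * (Gamma a * (β ^ h * β ^ h)) := by ring
    _ ≤ _ := mul_le_mul_of_nonneg_right (Gamma_add_two_mul_mul_Gamma_le ha hh) (by positivity)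
    _ = _ := by ring

lemma ae_sq_rpow_sub_one_le (a β s : ℝ) :
    ∀ᵐ r ∂gammaMeasure a β, (r ^ s - 1) ^ 2 ≤ r ^ (2 * (2 * s)) - 2 * r ^ (2 * s) + 1 := by
  filter_upwards [ae_gammaMeasure_pos a β] with r hr
  have two_mul_rpow (y : ℝ) : r ^ (2 * y) = (r ^ y) ^ 2 := by
    rw [mul_comm, rpow_mul hr.le, rpow_two]
  rw [two_mul_rpow, two_mul_rpow]
  have := rpow_pos_of_pos hr s
  nlinarith [mul_nonneg (sq_nonneg (r ^ s - 1)) (by positivity : 0 ≤ r ^ s * (r ^ s + 2))]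

lemma integrable_sq_rpow_sub_one_gammaMeasure {s : ℝ} (ha : 0 < a) (hβ : 0 < β) (hs : 0 ≤ s) :
    Integrable (fun r => (r ^ s - 1) ^ 2) (gammaMeasure a β) := by
  have := isProbabilityMeasure_gammaMeasure ha hβ
  refine (((integrable_rpow_gammaMeasure ha (q := 2 * (2 * s)) (by positivity) hβ).sub
    ((integrable_rpow_gammaMeasure ha (q := 2 * s) (by positivity) hβ).const_mul 2)).add
    (integrable_const 1)).mono' (by fun_prop) ?_
  filter_upwards [ae_sq_rpow_sub_one_le a β s] with r hr
  rwa [norm_of_nonneg (sq_nonneg (r ^ s - 1))]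

lemma integral_sq_rpow_sub_one_gammaMeasure_le {s : ℝ} (ha : 1 < a) (hβ : 0 < β) (hs : 0 < s)
    (h_one : ∫ r, r ^ (2 * s) ∂gammaMeasure a β = 1) :
    ∫ r, (r ^ s - 1) ^ 2 ∂gammaMeasure a β
      ≤ exp (2 * s * ((2 * (2 * s) + 1) / (a - 1))) - 1 := by
  have ha0 : 0 < a := by linarith
  have := isProbabilityMeasure_gammaMeasure ha0 hβ
  have integrable_two := integrable_rpow_gammaMeasure ha0 (q := 2 * s) (by positivity) hβ
  have integrable_four := integrable_rpow_gammaMeasure ha0 (q := 2 * (2 * s)) (by positivity) hβ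
  have integrable_diff : Integrable (fun r => r ^ (2 * (2 * s)) - 2 * r ^ (2 * s))
      (gammaMeasure a β) := integrable_four.sub (integrable_two.const_mul 2)
  have four_le := integral_rpow_two_mul_gammaMeasure_le ha hβ (h := 2 * s) (by positivity)
  rw [h_one, one_pow, one_mul] at four_le
  calc ∫ r, (r ^ s - 1) ^ 2 ∂gammaMeasure a β
    _ ≤ ∫ r, (r ^ (2 * (2 * s)) - 2 * r ^ (2 * s) + 1) ∂gammaMeasure a β :=
      integral_mono_ae (integrable_sq_rpow_sub_one_gammaMeasure ha0 hβ hs.le)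
        (integrable_diff.add (integrable_const 1)) (ae_sq_rpow_sub_one_le a β s)
    _ = ∫ r, r ^ (2 * (2 * s)) ∂gammaMeasure a β - 1 := by
      rw [integral_add integrable_diff (integrable_const 1),
        integral_sub integrable_four (integrable_two.const_mul 2), integral_const_mul, h_one,
        integral_const, probReal_univ, smul_eq_mul]
      ring
    _ ≤ exp (2 * s * ((2 * (2 * s) + 1) / (a - 1))) - 1 := by linarith

lemma exp_sub_one_le_mul_exp (y : ℝ) : exp y - 1 ≤ y * exp y := by
  have mul_le := mul_le_mul_of_nonneg_right (one_sub_le_exp_neg y) (exp_pos y).le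
  rw [← exp_add, neg_add_cancel, exp_zero] at mul_le
  linarith

end GammaMoments

section GammaRoot

/-- The law of `R ^ (1 / p)` for a gamma variable `R` of shape `m / p + 1` and rate `β`: the
random scale that turns the uniform distribution on an `m`-dimensional `ℓ^p` ball into a product
of generalized Gaussians. -/
noncomputable def gammaRootMeasure (p m β : ℝ) : Measure ℝ :=
  (gammaMeasure (m / p + 1) β).map fun r => r ^ (1 / p)

variable {p m β : ℝ}

lemma isProbabilityMeasure_gammaRootMeasure (hp : 0 < p) (hm : 0 ≤ m) (hβ : 0 < β) :
    IsProbabilityMeasure (gammaRootMeasure p m β) := by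
  have := isProbabilityMeasure_gammaMeasure (by positivity : 0 < m / p + 1) hβ
  exact Measure.isProbabilityMeasure_map (by fun_prop)

lemma ae_gammaRootMeasure_pos (p m β : ℝ) : ∀ᵐ w ∂gammaRootMeasure p m β, 0 < w := by
  rw [gammaRootMeasure, ae_map_iff (by fun_prop) measurableSet_Ioi]
  filter_upwards [ae_gammaMeasure_pos _ β] with r hr using rpow_pos_of_pos hr _

lemma integrable_inv_gammaRootMeasure (hp : 0 < p) (hm : 1 ≤ m) (hβ : 0 < β) :
    Integrable (fun w => w⁻¹) (gammaRootMeasure p m β) := by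
  have : 0 < m := by linarith
  have exponent_pos : 0 < m / p + 1 + -(1 / p) := by
    linarith [div_le_div_of_nonneg_right hm hp.le]
  rw [gammaRootMeasure, integrable_map_measure (by fun_prop) (by fun_prop)]
  refine (integrable_rpow_gammaMeasure (by positivity) exponent_pos hβ).congr ?_
  filter_upwards [ae_gammaMeasure_pos _ β] with r hr using rpow_neg hr.le _

lemma integral_inv_gammaRootMeasure_pos (hp : 0 < p) (hm : 1 ≤ m) (hβ : 0 < β) :
    0 < ∫ w, w⁻¹ ∂gammaRootMeasure p m β := by
  have := isProbabilityMeasure_gammaRootMeasure hp (zero_le_one.trans hm) hβ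
  have ae_pos := ae_gammaRootMeasure_pos p m β
  refine (integral_pos_iff_support_of_nonneg_ae ?_ (integrable_inv_gammaRootMeasure hp hm hβ)).2 ?_
  · filter_upwards [ae_pos] with w hw using (inv_pos.2 hw).le
  · have full : (Function.support fun w : ℝ => w⁻¹) ∈ ae (gammaRootMeasure p m β) := by
      filter_upwards [ae_pos] with w hw using (inv_pos.2 hw).ne'
    rw [measure_congr (Filter.eventuallyEq_univ.2 full), measure_univ]
    exact one_pos

lemma integral_sq_gammaRootMeasure (p m β : ℝ) :
    ∫ w, w ^ 2 ∂gammaRootMeasure p m β = ∫ r, r ^ (2 * (1 / p)) ∂gammaMeasure (m / p + 1) β := by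
  rw [gammaRootMeasure, integral_map (by fun_prop) (by fun_prop)]
  refine integral_congr_ae ?_
  filter_upwards [ae_gammaMeasure_pos _ β] with r hr
  rw [mul_comm 2, rpow_mul hr.le, rpow_two]

lemma integrable_sq_sub_one_gammaRootMeasure (hp : 0 < p) (hm : 0 ≤ m) (hβ : 0 < β) :
    Integrable (fun w => (w - 1) ^ 2) (gammaRootMeasure p m β) := by
  rw [gammaRootMeasure, integrable_map_measure (by fun_prop) (by fun_prop)]
  exact integrable_sq_rpow_sub_one_gammaMeasure (by positivity) hβ (by positivity)

lemma integral_sq_sub_one_gammaRootMeasure_le (hp : 0 < p) (hm : 1 ≤ m) (hβ : 0 < β)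
    (h_one : ∫ w, w ^ 2 ∂gammaRootMeasure p m β = 1) :
    ∫ w, (w - 1) ^ 2 ∂gammaRootMeasure p m β ≤ 2 * (4 / p + 1) * exp (2 * (4 / p + 1)) / m := by
  have m_pos : 0 < m := by linarith
  rw [integral_sq_gammaRootMeasure] at h_one
  rw [gammaRootMeasure, integral_map (by fun_prop) (by fun_prop)]
  calc ∫ r, (r ^ (1 / p) - 1) ^ 2 ∂gammaMeasure (m / p + 1) β
    _ ≤ exp (2 * (1 / p) * ((2 * (2 * (1 / p)) + 1) / (m / p + 1 - 1))) - 1 :=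
      integral_sq_rpow_sub_one_gammaMeasure_le (lt_add_of_pos_left 1 (by positivity)) hβ
        (by positivity) h_one
    _ = exp (2 * (4 / p + 1) / m) - 1 := by
      rw [add_sub_cancel_right]
      congr 2
      field
    _ ≤ 2 * (4 / p + 1) / m * exp (2 * (4 / p + 1) / m) := exp_sub_one_le_mul_exp _
    _ ≤ 2 * (4 / p + 1) / m * exp (2 * (4 / p + 1)) := by
      gcongr
      exact div_le_self (by positivity) hm
    _ = 2 * (4 / p + 1) * exp (2 * (4 / p + 1)) / m := by ring

end GammaRoot

section RadialMixture

lemma tilted_eq_of_withDensity_eq_smul {α : Type*} [MeasurableSpace α] {μ ν : Measure α}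
    [IsProbabilityMeasure ν] {f : α → ℝ} (hf : Measurable f) {c : ENNReal} (hc0 : c ≠ 0)
    (hc : c ≠ ⊤) (h : μ.withDensity (fun x => ENNReal.ofReal (exp (f x))) = c • ν) :
    μ.tilted f = ν := by
  have lintegral_exp : ∫⁻ x, ENNReal.ofReal (exp (f x)) ∂μ = c := by
    rw [← setLIntegral_univ, ← withDensity_apply _ MeasurableSet.univ, h, Measure.smul_apply,
      measure_univ, smul_eq_mul, mul_one]
  have integral_exp : ∫ x, exp (f x) ∂μ = c.toReal := by
    rw [integral_eq_lintegral_of_nonneg_ae (ae_of_all _ fun x => (exp_pos _).le) (by fun_prop),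
      lintegral_exp]
  have density_eq : (fun x => ENNReal.ofReal (exp (f x) / ∫ x, exp (f x) ∂μ))
      = c⁻¹ • fun x => ENNReal.ofReal (exp (f x)) := by
    ext x
    rw [integral_exp, ENNReal.ofReal_div_of_pos (ENNReal.toReal_pos hc0 hc),
      ENNReal.ofReal_toReal hc, ENNReal.div_eq_inv_mul, Pi.smul_apply, smul_eq_mul]
  rw [Measure.tilted, density_eq, withDensity_smul _ (by fun_prop), h, smul_smul,
    ENNReal.inv_mul_cancel hc0 hc, one_smul]

lemma measure_ne_zero_and_ne_top_of_cond {α : Type*} [MeasurableSpace α] (μ : Measure α)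
    (s : Set α) [IsProbabilityMeasure μ[|s]] : μ s ≠ 0 ∧ μ s ≠ ⊤ := by
  have inv_mul_eq : (μ s)⁻¹ * μ s = 1 := by
    rw [← measure_univ (μ := μ[|s]), ProbabilityTheory.cond, Measure.smul_apply,
      Measure.restrict_apply_univ, smul_eq_mul]
  constructor <;> intro h <;> simp [h] at inv_mul_eq

lemma lintegral_mul_lintegral_Ici_comp {α : Type*} [MeasurableSpace α] (μ : Measure α)
    [SFinite μ] {N : α → ℝ} (hN : Measurable N) {f : α → ENNReal} (hf : Measurable f)
    {g : ℝ → ENNReal} (hg : Measurable g) :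
    ∫⁻ x, (∫⁻ r in Set.Ici (N x), g r) * f x ∂μ
      = ∫⁻ r, g r * ∫⁻ x in {x | N x ≤ r}, f x ∂μ := by
  have measurableSet_sublevel (r : ℝ) : MeasurableSet {x | N x ≤ r} := hN measurableSet_Iic
  have left_eq (x : α) : (∫⁻ r in Set.Ici (N x), g r) * f x
      = ∫⁻ r, {z : α × ℝ | N z.1 ≤ z.2}.indicator (fun z => g z.2 * f z.1) (x, r) := by
    rw [← lintegral_mul_const _ hg, ← lintegral_indicator measurableSet_Ici]
    rfl
  have right_eq (r : ℝ) : g r * ∫⁻ x in {x | N x ≤ r}, f x ∂μ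
      = ∫⁻ x, {z : α × ℝ | N z.1 ≤ z.2}.indicator (fun z => g z.2 * f z.1) (x, r) ∂μ := by
    rw [← lintegral_const_mul _ hf, ← lintegral_indicator (measurableSet_sublevel r)]
    rfl
  simp only [left_eq, right_eq]
  refine lintegral_lintegral_swap (Measurable.aemeasurable ?_)
  exact Measurable.indicator (by fun_prop) (measurableSet_le (by fun_prop) measurable_snd)

lemma lintegral_Ici_mul_exp_neg {β : ℝ} (hβ : 0 < β) (s : ℝ) :
    ∫⁻ r in Set.Ici s, ENNReal.ofReal (β * exp (-β * r)) = ENNReal.ofReal (exp (-β * s)) := by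
  rw [setLIntegral_congr Ioi_ae_eq_Ici.symm, ← ofReal_integral_eq_lintegral_ofReal
    ((integrableOn_exp_mul_Ioi (neg_lt_zero.2 hβ) s).const_mul β)
    (ae_of_all _ fun r => by positivity), integral_const_mul,
    integral_exp_mul_Ioi (neg_lt_zero.2 hβ)]
  congr 1
  field

variable {E : Type*} [NormedAddCommGroup E] [NormedSpace ℝ E] [FiniteDimensional ℝ E]
  [MeasurableSpace E] [BorelSpace E] (μ : Measure E) [μ.IsAddHaarMeasure]

lemma lintegral_eq_mul_lintegral_comp_smul {w : ℝ} (hw : 0 < w) {f : E → ENNReal}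
    (hf : Measurable f) :
    ∫⁻ x, f x ∂μ = ENNReal.ofReal (w ^ Module.finrank ℝ E) * ∫⁻ x, f (w • x) ∂μ := by
  rw [← lintegral_map hf (measurable_const_smul w), Measure.map_addHaar_smul μ hw.ne',
    lintegral_smul_measure, smul_eq_mul, ← mul_assoc, ← ENNReal.ofReal_mul (by positivity),
    abs_of_pos (by positivity), mul_inv_cancel₀ (by positivity), ENNReal.ofReal_one, one_mul]

variable {N : E → ℝ} {p β : ℝ}

lemma setLIntegral_sublevel_eq (hN : Measurable N)
    (hom : ∀ r > 0, ∀ x, N (r ^ (1 / p) • x) = r * N x) {r : ℝ} (hr : 0 < r) {f : E → ENNReal}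
    (hf : Measurable f) :
    ∫⁻ x in {x | N x ≤ r}, f x ∂μ
      = ENNReal.ofReal (r ^ (Module.finrank ℝ E / p))
        * ∫⁻ x in {x | N x ≤ 1}, f (r ^ (1 / p) • x) ∂μ := by
  have measurableSet_sublevel (r : ℝ) : MeasurableSet {x | N x ≤ r} := hN measurableSet_Iic
  have mem_iff (x : E) : N (r ^ (1 / p) • x) ≤ r ↔ N x ≤ 1 := by
    rw [hom r hr, mul_le_iff_le_one_right hr]
  have pow_eq : (r ^ (1 / p)) ^ Module.finrank ℝ E = r ^ (Module.finrank ℝ E / p) := by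
    rw [← rpow_natCast, ← rpow_mul hr.le, one_div_mul_eq_div]
  rw [← lintegral_indicator (measurableSet_sublevel r), lintegral_eq_mul_lintegral_comp_smul μ
    (rpow_pos_of_pos hr (1 / p)) (hf.indicator (measurableSet_sublevel r)), pow_eq,
    ← lintegral_indicator (measurableSet_sublevel 1)]
  simp only [Set.indicator, Set.mem_ofPred_eq, mem_iff]

lemma mul_exp_neg_mul_rpow_eq (hβ : 0 < β) {s r : ℝ} (hs : 0 ≤ s) (hr : 0 < r) :
    β * exp (-β * r) * r ^ s = Gamma (s + 1) / β ^ s * gammaPDFReal (s + 1) β r := by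
  have := gammaPDFReal_mul_rpow one_pos (by positivity : 0 < 1 + s) hβ hr
  simpa [gammaPDFReal, hr.le, add_comm] using this

lemma lintegral_exp_neg_mul_eq (hN : Measurable N) (hN0 : ∀ x, 0 ≤ N x)
    (hom : ∀ r > 0, ∀ x, N (r ^ (1 / p) • x) = r * N x) (hp : 0 < p) (hβ : 0 < β)
    {f : E → ENNReal} (hf : Measurable f) :
    ∫⁻ x, ENNReal.ofReal (exp (-β * N x)) * f x ∂μ
      = ENNReal.ofReal (Gamma (Module.finrank ℝ E / p + 1) / β ^ (Module.finrank ℝ E / p : ℝ))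
        * ∫⁻ r, ∫⁻ x in {x | N x ≤ 1}, f (r ^ (1 / p) • x) ∂μ
            ∂gammaMeasure (Module.finrank ℝ E / p + 1) β := by
  set s : ℝ := Module.finrank ℝ E / p
  have hs : 0 ≤ s := by positivity
  have inner_measurable :
      Measurable fun r : ℝ => ∫⁻ x in {x | N x ≤ 1}, f (r ^ (1 / p) • x) ∂μ :=
    Measurable.lintegral_prod_right' (f := fun z : ℝ × E => f (z.1 ^ (1 / p) • z.2)) (by fun_prop)
  simp only [← lintegral_Ici_mul_exp_neg hβ]
  rw [lintegral_mul_lintegral_Ici_comp μ hN hf (by fun_prop), gammaMeasure,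
    lintegral_withDensity_eq_lintegral_mul _ (measurable_gammaPDF _ _) inner_measurable,
    ← lintegral_const_mul _ ((measurable_gammaPDF _ _).mul inner_measurable)]
  refine lintegral_congr_ae ?_
  filter_upwards [Measure.ae_ne volume 0] with r hr0
  rcases hr0.lt_or_gt with neg | pos
  · have sublevel_empty : {x | N x ≤ r} = ∅ :=
      Set.eq_empty_of_forall_notMem fun x hx => (hx.trans_lt neg).not_ge (hN0 x)
    simp [sublevel_empty, gammaPDF_of_neg neg]
  · have := Gamma_pos_of_pos (by positivity : 0 < s + 1)
    rw [setLIntegral_sublevel_eq μ hN hom pos hf, Pi.mul_apply, ← mul_assoc, ← mul_assoc,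
      gammaPDF, ← ENNReal.ofReal_mul (by positivity), ← ENNReal.ofReal_mul (by positivity),
      mul_exp_neg_mul_rpow_eq hβ hs pos]

theorem tilted_neg_mul_eq_map_gammaMeasure_prod (hN : Measurable N) (hN0 : ∀ x, 0 ≤ N x)
    (hom : ∀ r > 0, ∀ x, N (r ^ (1 / p) • x) = r * N x) (hp : 0 < p) (hβ : 0 < β)
    [IsProbabilityMeasure μ[|{x | N x ≤ 1}]] :
    μ.tilted (fun x => -β * N x)
      = ((gammaMeasure (Module.finrank ℝ E / p + 1) β).prod μ[|{x | N x ≤ 1}]).map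
          fun z => z.1 ^ (1 / p) • z.2 := by
  set s : ℝ := Module.finrank ℝ E / p
  have hs : 0 < s + 1 := by positivity
  set B := {x | N x ≤ 1}
  have : IsProbabilityMeasure (gammaMeasure (s + 1) β) := isProbabilityMeasure_gammaMeasure hs hβ
  have smul_measurable : Measurable fun z : ℝ × E => z.1 ^ (1 / p) • z.2 := by fun_prop
  have : IsProbabilityMeasure (((gammaMeasure (s + 1) β).prod μ[|B]).map
      fun z => z.1 ^ (1 / p) • z.2) :=
    Measure.isProbabilityMeasure_map smul_measurable.aemeasurable
  have measure_B_ne := measure_ne_zero_and_ne_top_of_cond μ B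
  have restrict_eq : μ.restrict B = μ B • μ[|B] := by
    rw [ProbabilityTheory.cond, smul_smul, ENNReal.mul_inv_cancel measure_B_ne.1 measure_B_ne.2,
      one_smul]
  refine tilted_eq_of_withDensity_eq_smul
    (c := ENNReal.ofReal (Gamma (s + 1) / β ^ s) * μ B) (by fun_prop) ?_ ?_ ?_
  · have := Gamma_pos_of_pos hs
    exact mul_ne_zero (ENNReal.ofReal_pos.2 (by positivity)).ne' measure_B_ne.1
  · exact ENNReal.mul_ne_top ENNReal.ofReal_ne_top measure_B_ne.2
  refine Measure.ext_of_lintegral _ fun f hf => ?_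
  rw [lintegral_withDensity_eq_lintegral_mul _ (by fun_prop) hf, lintegral_smul_measure,
    lintegral_map hf smul_measurable, lintegral_prod _ (by fun_prop), smul_eq_mul, mul_assoc,
    ← lintegral_const_mul _ (by fun_prop)]
  simp only [Pi.mul_apply, lintegral_exp_neg_mul_eq μ hN hN0 hom hp hβ hf]
  congr 1
  refine lintegral_congr fun r => ?_
  rw [← smul_eq_mul, ← lintegral_smul_measure, ← restrict_eq]

end RadialMixture

section Mixture

lemma map_map_prod_smul_eq_mconv {E : Type*} [MeasurableSpace E] [SMul ℝ E] [MeasurableSMul₂ ℝ E]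
    (γ : Measure ℝ) [SFinite γ] (ρ : Measure E) [SFinite ρ] {φ : ℝ → ℝ} (hφ : Measurable φ)
    {L : E → ℝ} (hL : Measurable L) (hom : ∀ (r : ℝ) (x : E), L (r • x) = r * L x) :
    ((γ.prod ρ).map fun z => φ z.1 • z.2).map L = γ.map φ ∗ₘ ρ.map L := by
  rw [Measure.mconv, Measure.map_prod_map γ ρ hφ hL, Measure.map_map hL (by fun_prop),
    Measure.map_map measurable_mul (by fun_prop)]
  congr 1
  ext z
  exact hom (φ z.1) z.2

lemma integral_sq_mconv (ν μ : Measure ℝ) [SFinite ν] [SFinite μ] :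
    ∫ x, x ^ 2 ∂(ν ∗ₘ μ) = (∫ w, w ^ 2 ∂ν) * ∫ x, x ^ 2 ∂μ := by
  rw [Measure.mconv, integral_map (by fun_prop) (by fun_prop)]
  simp only [mul_pow]
  exact integral_prod_mul (fun w : ℝ => w ^ 2) fun x : ℝ => x ^ 2

variable {ν μ : Measure ℝ} [IsProbabilityMeasure ν] [IsProbabilityMeasure μ]

lemma charFun_mconv (u : ℝ) : charFun (ν ∗ₘ μ) u = ∫ w, charFun μ (w * u) ∂ν := by
  rw [charFun_apply_real, Measure.mconv, integral_map (by fun_prop) (by fun_prop), integral_prod]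
  · simp only [charFun_apply_real]
    congr! 5
    push_cast
    ring
  · refine (integrable_const (1 : ℝ)).mono' (by fun_prop) (ae_of_all _ fun z => ?_)
    rw [← Complex.ofReal_mul, Complex.norm_exp_ofReal_mul_I]

lemma norm_charFun_mconv_mul_abs_le {B : ℝ} (hν : ∀ᵐ w ∂ν, 0 < w)
    (hint : Integrable (fun w => w⁻¹) ν) (h : ∀ v, ‖charFun μ v‖ * |v| ≤ B) (u : ℝ) :
    ‖charFun (ν ∗ₘ μ) u‖ * |u| ≤ B * ∫ w, w⁻¹ ∂ν := by
  rw [charFun_mconv, mul_comm, ← norm_eq_abs, ← norm_smul, ← integral_smul, ← integral_const_mul]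
  refine norm_integral_le_of_norm_le (hint.const_mul B) ?_
  filter_upwards [hν] with w hw
  rw [norm_smul, norm_eq_abs, ← div_eq_mul_inv, le_div_iff₀ hw]
  have := h (w * u)
  rw [abs_mul, abs_of_pos hw] at this
  linarith

end Mixture

section GeneralizedGaussian

lemma pi_tilted_eq_tilted_sum {ι : Type*} [Fintype ι] {α : ι → Type*} [∀ i, MeasurableSpace (α i)]
    (μ : ∀ i, Measure (α i)) [∀ i, SigmaFinite (μ i)] (f : ∀ i, α i → ℝ) :
    Measure.pi (fun i => (μ i).tilted (f i)) = (Measure.pi μ).tilted fun x => ∑ i, f i (x i) := by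
  refine Measure.pi_eq fun s _ => ?_
  simp only [tilted_apply_eq_ofReal_integral, exp_sum, Measure.restrict_pi_pi,
    integral_fintype_prod_eq_prod (fun i x => exp (f i x)), ← Finset.prod_div_distrib]
  rw [integral_fintype_prod_eq_prod fun i x => exp (f i x) / ∫ y, exp (f i y) ∂μ i]
  exact ENNReal.ofReal_prod_of_nonneg fun i _ => integral_nonneg fun x => by positivity

/-- The generalized Gaussian distribution on `ℝ`, with density proportional to
`x ↦ exp (-β * |x| ^ p)`. -/
noncomputable def generalizedGaussian (p β : ℝ) : Measure ℝ :=
  volume.tilted fun x => -β * |x| ^ p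

variable {p β : ℝ}

lemma pi_generalizedGaussian {ι : Type*} [Fintype ι] (p β : ℝ) :
    Measure.pi (fun _ : ι => generalizedGaussian p β)
      = volume.tilted fun x => -β * ∑ k, |x k| ^ p := by
  simp only [generalizedGaussian, pi_tilted_eq_tilted_sum, ← Finset.mul_sum, volume_pi]

lemma integral_abs_rpow_mul_exp_neg_mul_abs_rpow {q : ℝ} (hp : 0 < p) (hq : -1 < q) (hβ : 0 < β) :
    ∫ x, |x| ^ q * exp (-β * |x| ^ p)
      = 2 / p * β ^ (-(q + 1) / p) * Gamma ((q + 1) / p) := by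
  rw [integral_comp_abs (f := fun x => x ^ q * exp (-β * x ^ p)),
    integral_rpow_mul_exp_neg_mul_rpow hp hq hβ]
  ring

lemma integral_exp_neg_mul_abs_rpow (hp : 0 < p) (hβ : 0 < β) :
    ∫ x, exp (-β * |x| ^ p) = 2 / p * β ^ (-1 / p) * Gamma (1 / p) := by
  simpa using integral_abs_rpow_mul_exp_neg_mul_abs_rpow hp neg_one_lt_zero hβ

lemma isProbabilityMeasure_generalizedGaussian (hp : 0 < p) (hβ : 0 < β) :
    IsProbabilityMeasure (generalizedGaussian p β) := by
  refine isProbabilityMeasure_tilted (Integrable.of_integral_ne_zero ?_)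
  rw [integral_exp_neg_mul_abs_rpow hp hβ]
  have := Gamma_pos_of_pos (one_div_pos.2 hp)
  positivity

lemma integral_abs_rpow_generalizedGaussian {q : ℝ} (hp : 0 < p) (hq : -1 < q) (hβ : 0 < β) :
    ∫ x, |x| ^ q ∂generalizedGaussian p β
      = Gamma ((q + 1) / p) / (Gamma (1 / p) * β ^ (q / p)) := by
  have := Gamma_pos_of_pos (one_div_pos.2 hp)
  rw [generalizedGaussian, integral_tilted]
  simp only [smul_eq_mul, div_mul_eq_mul_div, mul_comm (exp _), integral_div]
  rw [integral_exp_neg_mul_abs_rpow hp hβ, integral_abs_rpow_mul_exp_neg_mul_abs_rpow hp hq hβ,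
    neg_add', sub_div, sub_eq_add_neg, ← neg_div, rpow_add hβ, neg_div, rpow_neg hβ.le]
  field

lemma integrable_abs_rpow_generalizedGaussian {q : ℝ} (hp : 0 < p) (hq : -1 < q) (hβ : 0 < β) :
    Integrable (fun x => |x| ^ q) (generalizedGaussian p β) := by
  refine Integrable.of_integral_ne_zero ?_
  rw [integral_abs_rpow_generalizedGaussian hp hq hβ]
  have := Gamma_pos_of_pos (one_div_pos.2 hp)
  have := Gamma_pos_of_pos (div_pos (neg_lt_iff_pos_add.1 hq) hp)
  positivity

lemma integrable_abs_cube_generalizedGaussian (hp : 0 < p) (hβ : 0 < β) :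
    Integrable (fun x => |x| ^ 3) (generalizedGaussian p β) := by
  exact_mod_cast integrable_abs_rpow_generalizedGaussian hp (q := 3) (by norm_num) hβ

lemma integral_id_generalizedGaussian (p β : ℝ) : ∫ x, x ∂generalizedGaussian p β = 0 := by
  rw [generalizedGaussian, integral_tilted, ← self_eq_neg, ← integral_neg,
    ← integral_neg_eq_self]
  simp only [abs_neg, smul_eq_mul, mul_neg]

lemma exists_integral_sq_generalizedGaussian_eq_one (hp : 0 < p) :
    ∃ β > 0, ∫ x, x ^ 2 ∂generalizedGaussian p β = 1 := by
  have := Gamma_pos_of_pos (one_div_pos.2 hp)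
  have := Gamma_pos_of_pos (div_pos three_pos hp)
  refine ⟨(Gamma (3 / p) / Gamma (1 / p)) ^ (p / 2), by positivity, ?_⟩
  have moment := integral_abs_rpow_generalizedGaussian (q := 2) hp (by norm_num)
    (by positivity : 0 < (Gamma (3 / p) / Gamma (1 / p)) ^ (p / 2))
  rw [← rpow_mul (by positivity), div_mul_div_cancel₀' hp.ne', div_self two_ne_zero, rpow_one]
    at moment
  simp only [rpow_two, sq_abs] at moment
  rw [moment]
  norm_num
  field

lemma setOf_abs_rpow_le_one (hp : 0 < p) : {x : ℝ | |x| ^ p ≤ 1} = Set.Icc (-1) 1 := by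
  ext x
  rw [Set.mem_ofPred_eq, Set.mem_Icc, ← abs_le, ← rpow_le_rpow_iff (abs_nonneg x) zero_le_one hp,
    one_rpow]

lemma norm_charFun_cond_Icc_mul_abs_le (v : ℝ) :
    ‖charFun (volume[|Set.Icc (-1 : ℝ) 1]) v‖ * |v| ≤ 1 := by
  rcases eq_or_ne v 0 with rfl | hv
  · simp
  have hvI : (v * Complex.I : ℂ) ≠ 0 := mul_ne_zero (Complex.ofReal_ne_zero.2 hv) Complex.I_ne_zero
  have charFun_eq : charFun (volume[|Set.Icc (-1 : ℝ) 1]) v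
      = (2⁻¹ : ℝ) • ((Complex.exp (v * Complex.I) - Complex.exp ((-v : ℝ) * Complex.I))
        / (v * Complex.I)) := by
    rw [charFun_apply_real, ProbabilityTheory.cond, integral_smul_measure, Real.volume_Icc,
      integral_Icc_eq_integral_Ioc, ← intervalIntegral.integral_of_le (by norm_num)]
    simp only [mul_right_comm _ _ Complex.I]
    rw [integral_exp_mul_complex hvI, ENNReal.toReal_inv, ENNReal.toReal_ofReal (by norm_num),
      sub_neg_eq_add, one_add_one_eq_two]
    simp
  have norm_sub_le :
      ‖Complex.exp (v * Complex.I) - Complex.exp ((-v : ℝ) * Complex.I)‖ ≤ 2 := by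
    refine (norm_sub_le _ _).trans_eq ?_
    rw [Complex.norm_exp_ofReal_mul_I, Complex.norm_exp_ofReal_mul_I, one_add_one_eq_two]
  rw [charFun_eq, norm_smul, norm_div, norm_mul, Complex.norm_I, mul_one, Complex.norm_real,
    norm_eq_abs v, mul_assoc, div_mul_cancel₀ _ (abs_pos.2 hv).ne', norm_of_nonneg (by norm_num)]
  linarith

lemma abs_mul_rpow_of_pos {r : ℝ} (hr : 0 < r) (x p : ℝ) : |r * x| ^ p = r ^ p * |x| ^ p := by
  rw [abs_mul, mul_rpow (abs_nonneg r) (abs_nonneg x), abs_of_pos hr]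

lemma abs_root_mul_rpow (hp : 0 < p) {r : ℝ} (hr : 0 < r) (x : ℝ) :
    |r ^ (1 / p) * x| ^ p = r * |x| ^ p := by
  rw [abs_mul_rpow_of_pos (by positivity), ← rpow_mul hr.le, one_div_mul_cancel hp.ne', rpow_one]

lemma isProbabilityMeasure_cond_Icc : IsProbabilityMeasure (volume[|Set.Icc (-1 : ℝ) 1]) :=
  cond_isProbabilityMeasure_of_finite (by simp) (by simp)

lemma generalizedGaussian_eq_mconv (hp : 0 < p) (hβ : 0 < β) :
    generalizedGaussian p β = gammaRootMeasure p 1 β ∗ₘ volume[|Set.Icc (-1 : ℝ) 1] := by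
  have := isProbabilityMeasure_gammaMeasure (by positivity : 0 < 1 / p + 1) hβ
  have : IsProbabilityMeasure (volume[|{x : ℝ | |x| ^ p ≤ 1}]) := by
    rw [setOf_abs_rpow_le_one hp]
    exact isProbabilityMeasure_cond_Icc
  have mixture := tilted_neg_mul_eq_map_gammaMeasure_prod volume (N := fun x : ℝ => |x| ^ p)
    (by fun_prop) (fun x => by positivity) (fun r hr => abs_root_mul_rpow hp hr) hp hβ
  rw [generalizedGaussian, mixture, Module.finrank_self, Nat.cast_one, setOf_abs_rpow_le_one hp,
    gammaRootMeasure, ← Measure.map_id (μ := volume[|Set.Icc (-1 : ℝ) 1]),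
    ← map_map_prod_smul_eq_mconv _ _ (by fun_prop) measurable_id fun _ _ => rfl, Measure.map_id,
    Measure.map_id]

lemma exists_norm_charFun_generalizedGaussian_mul_abs_le (hp : 0 < p) (hβ : 0 < β) :
    ∃ A > 0, ∀ u, ‖charFun (generalizedGaussian p β) u‖ * |u| ≤ A := by
  have := isProbabilityMeasure_gammaRootMeasure hp zero_le_one hβ
  have := isProbabilityMeasure_cond_Icc
  refine ⟨1 * ∫ w, w⁻¹ ∂gammaRootMeasure p 1 β, ?_, fun u => ?_⟩
  · rw [one_mul]
    exact integral_inv_gammaRootMeasure_pos hp le_rfl hβ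
  · rw [generalizedGaussian_eq_mconv hp hβ]
    exact norm_charFun_mconv_mul_abs_le (ae_gammaRootMeasure_pos p 1 β)
      (integrable_inv_gammaRootMeasure hp le_rfl hβ) norm_charFun_cond_Icc_mul_abs_le u

end GeneralizedGaussian

section LpBall

/-- The uniform distribution on `c B_p^n`, with `n` replaced by an arbitrary finite index type. -/
noncomputable def uniformLpBall (ι : Type*) [Fintype ι] (p c : ℝ) : Measure (ι → ℝ) :=
  volume[|c • {x : ι → ℝ | ∑ k, |x k| ^ p ≤ 1}]

variable {ι : Type*} [Fintype ι] {p β c : ℝ}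

lemma uniformLpBall_eq_cond (hc : 0 < c) :
    uniformLpBall ι p c = volume[|{x : ι → ℝ | ∑ k, |c⁻¹ * x k| ^ p ≤ 1}] := by
  rw [uniformLpBall]
  congr 1
  ext x
  simp only [Set.mem_smul_set_iff_inv_smul_mem₀ hc.ne', Set.mem_ofPred_eq, Pi.smul_apply,
    smul_eq_mul]

variable [IsProbabilityMeasure (uniformLpBall ι p c)]

lemma pi_generalizedGaussian_eq_map_gammaMeasure_prod (hp : 0 < p) (hβ : 0 < β) (hc : 0 < c) :
    Measure.pi (fun _ : ι => generalizedGaussian p β)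
      = ((gammaMeasure (Fintype.card ι / p + 1) (β * c ^ p)).prod (uniformLpBall ι p c)).map
          fun z => z.1 ^ (1 / p) • z.2 := by
  have hom (r : ℝ) (hr : r > 0) (x : ι → ℝ) :
      ∑ k, |c⁻¹ * (r ^ (1 / p) • x) k| ^ p = r * ∑ k, |c⁻¹ * x k| ^ p := by
    simp only [Pi.smul_apply, smul_eq_mul, mul_left_comm c⁻¹, abs_root_mul_rpow hp hr,
      Finset.mul_sum]
  have rescale (x : ι → ℝ) : -β * ∑ k, |x k| ^ p = -(β * c ^ p) * ∑ k, |c⁻¹ * x k| ^ p := by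
    rw [← neg_mul, mul_assoc, Finset.mul_sum _ _ (c ^ p)]
    simp only [← abs_mul_rpow_of_pos hc, mul_inv_cancel_left₀ hc.ne']
  have : IsProbabilityMeasure (volume[|{x : ι → ℝ | ∑ k, |c⁻¹ * x k| ^ p ≤ 1}]) := by
    rwa [← uniformLpBall_eq_cond hc]
  rw [pi_generalizedGaussian, uniformLpBall_eq_cond hc, ← Module.finrank_fintype_fun_eq_card ℝ]
  simp only [rescale]
  exact tilted_neg_mul_eq_map_gammaMeasure_prod volume
    (N := fun x : ι → ℝ => ∑ k, |c⁻¹ * x k| ^ p) (by fun_prop) (fun x => by positivity) hom hp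
    (by positivity)

lemma map_pi_generalizedGaussian_eq_mconv (hp : 0 < p) (hβ : 0 < β) (hc : 0 < c)
    {L : (ι → ℝ) → ℝ} (hL : Measurable L) (hom : ∀ (r : ℝ) (x : ι → ℝ), L (r • x) = r * L x) :
    (Measure.pi fun _ : ι => generalizedGaussian p β).map L
      = gammaRootMeasure p (Fintype.card ι) (β * c ^ p) ∗ₘ (uniformLpBall ι p c).map L := by
  have := isProbabilityMeasure_gammaMeasure (by positivity : 0 < Fintype.card ι / p + 1)
    (by positivity : 0 < β * c ^ p)
  rw [pi_generalizedGaussian_eq_map_gammaMeasure_prod hp hβ hc]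
  exact map_map_prod_smul_eq_mconv _ _ (φ := fun r => r ^ (1 / p)) (by fun_prop) hL hom

lemma integral_sq_gammaRootMeasure_eq_one (hp : 0 < p) (hβ : 0 < β) (hc : 0 < c)
    (hvar : ∫ x, x ^ 2 ∂generalizedGaussian p β = 1) {i : ι}
    (hi : ∫ x, x i ^ 2 ∂uniformLpBall ι p c = 1) :
    ∫ w, w ^ 2 ∂gammaRootMeasure p (Fintype.card ι) (β * c ^ p) = 1 := by
  have := isProbabilityMeasure_generalizedGaussian hp hβ
  have := isProbabilityMeasure_gammaRootMeasure hp (Fintype.card ι).cast_nonneg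
    (by positivity : 0 < β * c ^ p)
  have marginal := map_pi_generalizedGaussian_eq_mconv hp hβ hc (measurable_pi_apply i)
    fun _ _ => rfl
  rw [(measurePreserving_eval _ i).map_eq] at marginal
  rwa [marginal, integral_sq_mconv, integral_map (measurable_pi_apply i).aemeasurable (by fun_prop),
    hi, mul_one] at hvar

lemma nonempty_of_sum_sq_eq_one {θ : ι → ℝ} (hθ : ∑ k, θ k ^ 2 = 1) : Nonempty ι := by
  by_contra empty
  simp [not_nonempty_iff.1 empty] at hθ

lemma integral_sq_sub_one_gammaRootMeasure_le_sum_abs_cube (hp : 0 < p) (hβ : 0 < β) {θ : ι → ℝ}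
    (hθ : ∑ k, θ k ^ 2 = 1) (h_one : ∫ w, w ^ 2 ∂gammaRootMeasure p (Fintype.card ι) β = 1) :
    ∫ w, (w - 1) ^ 2 ∂gammaRootMeasure p (Fintype.card ι) β
      ≤ (√(2 * (4 / p + 1) * exp (2 * (4 / p + 1))) * ∑ k, |θ k| ^ 3) ^ 2 := by
  have := nonempty_of_sum_sq_eq_one hθ
  have one_le_card : (1 : ℝ) ≤ Fintype.card ι := by exact_mod_cast Fintype.card_pos
  refine (integral_sq_sub_one_gammaRootMeasure_le hp one_le_card hβ h_one).trans ?_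
  rw [mul_pow, sq_sqrt (by positivity), div_le_iff₀ (by positivity), mul_assoc (_ * exp _),
    mul_comm ((∑ k, |θ k| ^ 3) ^ 2)]
  exact le_mul_of_one_le_right (by positivity) (one_le_card_mul_sum_abs_cube_sq hθ)

theorem exists_abs_cdf_linearForm_uniformLpBall_sub_gaussian_le (hp : 0 < p) :
    ∃ C > 0, ∀ {ι : Type*} [Fintype ι] {c : ℝ} [IsProbabilityMeasure (uniformLpBall ι p c)],
      0 < c → (∀ i, ∫ x, x i ^ 2 ∂uniformLpBall ι p c = 1) →
      ∀ {θ : ι → ℝ}, ∑ k, θ k ^ 2 = 1 → ∀ t,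
      |cdf ((uniformLpBall ι p c).map fun x => ∑ k, θ k * x k) t - cdf (gaussianReal 0 1) t|
        ≤ C * ∑ k, |θ k| ^ 3 := by
  obtain ⟨β, hβ, hvar⟩ := exists_integral_sq_generalizedGaussian_eq_one hp
  have := isProbabilityMeasure_generalizedGaussian hp hβ
  obtain ⟨A, hA, decay⟩ := exists_norm_charFun_generalizedGaussian_mul_abs_le hp hβ
  obtain ⟨C, hC, berryEsseen⟩ := exists_abs_cdf_linearForm_sub_gaussian_le
    (by positivity : 0 < (32 * A ^ 2)⁻¹) (integrable_abs_cube_generalizedGaussian hp hβ)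
    (integral_id_generalizedGaussian p β) hvar (norm_charFun_sq_mul_le_one hA decay)
  set D := 2 * (4 / p + 1) * exp (2 * (4 / p + 1))
  refine ⟨2 * C + 16 * √D, by positivity, fun {ι} _ {c} _ hc hsq {θ} hθ t => ?_⟩
  have := Measure.isProbabilityMeasure_map (aemeasurable_linearForm θ (uniformLpBall ι p c))
  have rate_pos := sum_abs_cube_pos hθ
  have : Nonempty ι := nonempty_of_sum_sq_eq_one hθ
  have scale_pos : 0 < β * c ^ p := by positivity
  have := isProbabilityMeasure_gammaRootMeasure hp (Fintype.card ι).cast_nonneg scale_pos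
  have concentration := integral_sq_sub_one_gammaRootMeasure_le_sum_abs_cube hp scale_pos hθ
    (integral_sq_gammaRootMeasure_eq_one hp hβ hc hvar (hsq (Classical.arbitrary ι)))
  have mixture_close t := berryEsseen hθ t
  simp only [map_pi_generalizedGaussian_eq_mconv hp hβ hc (L := fun x : ι → ℝ => ∑ k, θ k * x k)
    (by fun_prop) fun r x => by simp only [Pi.smul_apply, smul_eq_mul, Finset.mul_sum,
      mul_left_comm]] at mixture_close
  calc |cdf ((uniformLpBall ι p c).map fun x => ∑ k, θ k * x k) t - cdf (gaussianReal 0 1) t|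
    _ ≤ 2 * (C * ∑ k, |θ k| ^ 3) + 16 * (√D * ∑ k, |θ k| ^ 3) :=
      abs_cdf_sub_gaussian_le_of_mconv (ae_gammaRootMeasure_pos _ _ _) (by positivity)
        (integrable_sq_sub_one_gammaRootMeasure hp (Fintype.card ι).cast_nonneg scale_pos)
        concentration mixture_close t
    _ = (2 * C + 16 * √D) * ∑ k, |θ k| ^ 3 := by ring

end LpBall

/-- Berry-Esseen type bound for marginals of the uniform distribution on a suitably
rescaled `l_p` ball `c_{p,n} B_p^n`, chosen so that the vector is isotropic. -/
theorem clt_lp_ball (p : ℝ) (hp : 0 < p) :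
    ∃ C : ℝ, 0 < C ∧
      ∀ (n : ℕ) (Ω : Type) [MeasureSpace Ω] [IsProbabilityMeasure (ℙ : Measure Ω)]
        (X : Ω → Fin n → ℝ) (c : ℝ), 0 < c →
        Measurable X →
        -- X is distributed uniformly on c • B_p^n
        Measure.map X ℙ =
          (volume (c • {x : Fin n → ℝ | ∑ k, |x k| ^ p ≤ 1}))⁻¹ •
            (volume : Measure (Fin n → ℝ)).restrict
              (c • {x : Fin n → ℝ | ∑ k, |x k| ^ p ≤ 1}) →
        -- c is chosen so that X is isotropic
        (∀ i, ∫ ω, X ω i ∂ℙ = 0) →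
        (∀ i j, ∫ ω, X ω i * X ω j ∂ℙ = if i = j then 1 else 0) →
        ∀ θ : Fin n → ℝ, (∑ k, (θ k) ^ 2) = 1 →
        ∀ t : ℝ,
          |(ℙ {ω | ∑ k, θ k * X ω k ≤ t}).toReal
              - ((gaussianReal 0 1) {x | x ≤ t}).toReal|
            ≤ C * ∑ k, |θ k| ^ 3 := by
  obtain ⟨C, hC, bound⟩ := exists_abs_cdf_linearForm_uniformLpBall_sub_gaussian_le hp
  refine ⟨C, hC, fun n Ω _ _ X c hc hX law _ cov θ hθ t => ?_⟩
  replace law : Measure.map X ℙ = uniformLpBall (Fin n) p c := law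
  have : IsProbabilityMeasure (uniformLpBall (Fin n) p c) :=
    law ▸ Measure.isProbabilityMeasure_map hX.aemeasurable
  have second_moment (i : Fin n) : ∫ x, x i ^ 2 ∂uniformLpBall (Fin n) p c = 1 := by
    rw [← law, integral_map hX.aemeasurable
      ((measurable_pi_apply i).pow_const 2).aestronglyMeasurable]
    simpa only [pow_two, if_true] using cov i i
  have linear_form_measurable : Measurable fun x : Fin n → ℝ => ∑ k, θ k * x k := by fun_prop
  have := Measure.isProbabilityMeasure_map (aemeasurable_linearForm θ (uniformLpBall (Fin n) p c))
  have cdf_eq : cdf ((uniformLpBall (Fin n) p c).map fun x => ∑ k, θ k * x k) t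
      = (ℙ {ω | ∑ k, θ k * X ω k ≤ t}).toReal := by
    rw [cdf_eq_real, ← law, Measure.map_map linear_form_measurable hX,
      map_measureReal_apply (linear_form_measurable.comp hX) measurableSet_Iic]
    rfl
  have gaussian_cdf_eq : cdf (gaussianReal 0 1) t = ((gaussianReal 0 1) {x | x ≤ t}).toReal :=
    cdf_eq_real _ t
  simpa only [cdf_eq, gaussian_cdf_eq] using bound hc second_moment hθ t
end

section
/- Let κ > 1 and let φ : ℝⁿ → ℝ be a function such that e^{-φ} is an unconditional probability density and (x_1,...,x_n) ↦ φ(x_1^κ,...,x_n^κ) is convex on the positive orthant ℝⁿ₊. Let X be a random vector with density e^{-φ(x)}. Then Var(|X|²) ≤ c_κ Σ_{j=1}^n E|X_j|⁴, where c_κ depends only on κ. -/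
open MeasureTheory ProbabilityTheory Real

/-!
Unconditionality lets us replace `X` by `(|X_1|, …, |X_n|)`, and then substitute `x_i = u_i ^ κ`.
In the variables `u` the density is the log-concave factor `e^{-φ(u^κ)}` times the Jacobian
`∏ κ u_i ^ (κ - 1)`, which for `κ > 1` is log-concave with room to spare: at the midpoint of `u_i`
and `v_i` the gain is of order `((u_i - v_i) / (u_i + v_i)) ^ 2`. Multiplying the two sides by
opposite tilts `e^{± s |x_i| ^ p}` costs `s (|x_i| ^ p - |y_i| ^ p)`, which this gain absorbs up to
a term `C s ^ 2 (|x_i| ^ (2 p) + |y_i| ^ (2 p))`. With `G = ∑ |x_i| ^ p` and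
`Q = C ∑ |x_i| ^ (2 p)`, the Prékopa–Leindler inequality therefore gives
`E e^{s G - s ^ 2 Q} * E e^{-s G - s ^ 2 Q} ≤ 1` for every `s`, and comparing the terms of order
`s ^ 2` as `s → 0` gives `Var G ≤ 2 E Q`.
-/

open Set (Ioi)
open scoped ENNReal NNReal Pointwise

-- The translates `min B + A` and `max A + B` meet only at `max A + min B`.
theorem volume_add_volume_le_volume_add_of_isCompact {A B : Set ℝ} (hA : IsCompact A)
    (hB : IsCompact B) (hA₀ : A.Nonempty) (hB₀ : B.Nonempty) :
    volume A + volume B ≤ volume (A + B) := by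
  obtain ⟨a, ha, ha_max⟩ := hA.exists_isGreatest hA₀
  obtain ⟨b, hb, hb_min⟩ := hB.exists_isLeast hB₀
  have overlap : AEDisjoint volume (b +ᵥ A) (a +ᵥ B) := by
    refine measure_mono_null (t := {a + b}) ?_ (measure_singleton _)
    rintro _ ⟨⟨x, hx, rfl⟩, y, hy, hxy⟩
    have := ha_max hx
    have := hb_min hy
    simp only [vadd_eq_add, Set.mem_singleton_iff] at hxy ⊢
    linarith
  have translates_subset : (b +ᵥ A) ∪ (a +ᵥ B) ⊆ A + B := by
    rw [add_comm A]
    refine Set.union_subset (Set.vadd_set_subset_add hb) ?_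
    rw [add_comm B]
    exact Set.vadd_set_subset_add ha
  calc
    volume A + volume B = volume (b +ᵥ A) + volume (a +ᵥ B) := by simp only [measure_vadd]
    _ = volume ((b +ᵥ A) ∪ (a +ᵥ B)) :=
      (measure_union₀ (hB.vadd a).measurableSet.nullMeasurableSet overlap).symm
    _ ≤ volume (A + B) := measure_mono translates_subset

theorem volume_add_volume_le_volume_add {A B : Set ℝ} (hA : MeasurableSet A)
    (hB : MeasurableSet B) (hA₀ : A.Nonempty) (hB₀ : B.Nonempty) :
    volume A + volume B ≤ volume (A + B) := by
  obtain ⟨a, ha⟩ := hA₀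
  obtain ⟨b, hb⟩ := hB₀
  rw [hA.measure_eq_iSup_isCompact, hB.measure_eq_iSup_isCompact]
  simp only [iSup_and']
  refine ENNReal.biSup_add_biSup_le' ⟨∅, by simp⟩ ⟨∅, by simp⟩ ?_
  rintro K ⟨hKA, hK⟩ L ⟨hLB, hL⟩
  calc
    volume K + volume L ≤ volume (insert a K) + volume (insert b L) := by
      gcongr <;> exact Set.subset_insert _ _
    _ ≤ volume (insert a K + insert b L) :=
      volume_add_volume_le_volume_add_of_isCompact (hK.insert a) (hL.insert b)
        (Set.insert_nonempty _ _) (Set.insert_nonempty _ _)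
    _ ≤ volume (A + B) := by
      gcongr <;> exact Set.insert_subset ‹_› ‹_›

theorem volume_add_volume_le_two_mul {A B C : Set ℝ} (hA : MeasurableSet A)
    (hB : MeasurableSet B) (hA₀ : A.Nonempty) (hB₀ : B.Nonempty)
    (hC : ∀ a ∈ A, ∀ b ∈ B, (a + b) / 2 ∈ C) : volume A + volume B ≤ 2 * volume C := by
  have add_subset : A + B ⊆ (2 : ℝ) • C := by
    rintro _ ⟨a, ha, b, hb, rfl⟩
    exact ⟨(a + b) / 2, hC a ha b hb, by simp only [smul_eq_mul]; ring⟩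
  calc
    volume A + volume B ≤ volume (A + B) := volume_add_volume_le_volume_add hA hB hA₀ hB₀
    _ ≤ volume ((2 : ℝ) • C) := measure_mono add_subset
    _ = 2 * volume C := by simp [Measure.addHaar_smul]

theorem lintegral_coe_eq_lintegral_volume_lt {f : ℝ → ℝ≥0} (hf : Measurable f) :
    ∫⁻ x, f x = ∫⁻ t in Ioi (0 : ℝ), volume {x | t < f x} := by
  simpa using lintegral_eq_lintegral_meas_lt volume
    (.of_forall fun x => (f x).coe_nonneg) (by fun_prop : AEMeasurable (fun x => (f x : ℝ)) _)

theorem lintegral_add_lintegral_le_of_isLUB_one {f g h : ℝ → ℝ≥0} (hf : Measurable f)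
    (hg : Measurable g) (hh : Measurable h) (hf₁ : IsLUB (Set.range f) 1)
    (hg₁ : IsLUB (Set.range g) 1) (hfgh : ∀ x y, f x * g y ≤ h ((x + y) / 2) ^ 2) :
    (∫⁻ x, f x) + ∫⁻ x, g x ≤ 2 * ∫⁻ x, h x := by
  have levels (t : ℝ) (ht : t ∈ Ioi 0) :
      volume {x | t < f x} + volume {x | t < g x} ≤ 2 * volume {x | t < h x} := by
    lift t to ℝ≥0 using le_of_lt ht
    simp only [NNReal.coe_lt_coe]
    rcases lt_or_ge t 1 with ht₁ | ht₁
    · refine volume_add_volume_le_two_mul (measurableSet_lt measurable_const hf)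
        (measurableSet_lt measurable_const hg) ?_ ?_ fun x hx y hy => ?_
      · simpa [Set.Nonempty] using (lt_isLUB_iff hf₁).1 ht₁
      · simpa [Set.Nonempty] using (lt_isLUB_iff hg₁).1 ht₁
      · change t < h ((x + y) / 2)
        refine lt_of_pow_lt_pow_left₀ 2 zero_le ?_
        calc
          t ^ 2 = t * t := sq t
          _ < f x * g y := mul_lt_mul'' hx hy zero_le zero_le
          _ ≤ h ((x + y) / 2) ^ 2 := hfgh x y
    · have hft : {x | t < f x} = ∅ :=
        Set.eq_empty_of_forall_notMem fun x => ((hf₁.1 ⟨x, rfl⟩).trans ht₁).not_gt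
      have hgt : {x | t < g x} = ∅ :=
        Set.eq_empty_of_forall_notMem fun x => ((hg₁.1 ⟨x, rfl⟩).trans ht₁).not_gt
      simp [hft, hgt]
  have measurable_level : Measurable fun t : ℝ => volume {x | t < f x} :=
    Antitone.measurable fun _ _ hst => measure_mono fun _ hx => lt_of_le_of_lt hst hx
  rw [lintegral_coe_eq_lintegral_volume_lt hf, lintegral_coe_eq_lintegral_volume_lt hg,
    lintegral_coe_eq_lintegral_volume_lt hh, ← lintegral_add_left measurable_level,
    ← lintegral_const_mul' _ _ ENNReal.ofNat_ne_top]
  exact setLIntegral_mono' measurableSet_Ioi levels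

theorem mul_le_sq_of_add_le_two_mul {a b c : ℝ≥0∞} (h : a + b ≤ 2 * c) : a * b ≤ c ^ 2 := by
  rcases eq_or_ne c ∞ with rfl | hc
  · simp
  have habc : a + b ≠ ∞ := ne_top_of_le_ne_top (by finiteness) h
  lift a to ℝ≥0 using (ENNReal.add_ne_top.1 habc).1
  lift b to ℝ≥0 using (ENNReal.add_ne_top.1 habc).2
  lift c to ℝ≥0 using hc
  norm_cast at h ⊢
  have : 4 * (a * b) ≤ 4 * c ^ 2 := by
    calc
      4 * (a * b) = 4 * a * b := by ring
      _ ≤ (a + b) ^ 2 := four_mul_le_sq_add a b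
      _ ≤ (2 * c) ^ 2 := by gcongr
      _ = 4 * c ^ 2 := by ring
  exact le_of_mul_le_mul_left this four_pos

theorem lintegral_coe_eq_mul_lintegral_div {α : Type*} [MeasurableSpace α] {μ : Measure α}
    (f : α → ℝ≥0) {c : ℝ≥0} (hc : c ≠ 0) : ∫⁻ x, f x ∂μ = c * ∫⁻ x, (f x / c : ℝ≥0) ∂μ := by
  rw [← lintegral_const_mul' _ _ ENNReal.coe_ne_top]
  refine lintegral_congr fun x => ?_
  rw [← ENNReal.coe_mul, mul_div_cancel₀ _ hc]

theorem isLUB_range_div_ciSup {α : Type*} [Nonempty α] {f : α → ℝ≥0}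
    (hf : BddAbove (Set.range f)) (hf₀ : ⨆ x, f x ≠ 0) :
    IsLUB (Set.range fun x => f x / ⨆ y, f y) 1 := by
  have hpos := pos_of_ne_zero hf₀
  refine ⟨Set.forall_mem_range.2 fun x => (div_le_one₀ hpos).2 (le_ciSup hf x), fun b hb => ?_⟩
  have ciSup_le_mul : ⨆ x, f x ≤ b * ⨆ x, f x :=
    ciSup_le fun x => (div_le_iff₀ hpos).1 (hb ⟨x, rfl⟩)
  exact (le_mul_iff_one_le_left hpos).1 ciSup_le_mul

theorem lintegral_mul_lintegral_le_sq_of_bddAbove {f g h : ℝ → ℝ≥0} (hf : Measurable f)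
    (hg : Measurable g) (hh : Measurable h) (hf' : BddAbove (Set.range f))
    (hg' : BddAbove (Set.range g)) (hfgh : ∀ x y, f x * g y ≤ h ((x + y) / 2) ^ 2) :
    (∫⁻ x, f x) * (∫⁻ x, g x) ≤ (∫⁻ x, h x) ^ 2 := by
  set M := ⨆ x, f x
  set L := ⨆ x, g x
  rcases eq_or_ne M 0 with hM | hM
  · have hf₀ (x : ℝ) : f x = 0 := le_zero_iff.1 (hM ▸ le_ciSup hf' x)
    simp [hf₀]
  rcases eq_or_ne L 0 with hL | hL
  · have hg₀ (x : ℝ) : g x = 0 := le_zero_iff.1 (hL ▸ le_ciSup hg' x)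
    simp [hg₀]
  set r := NNReal.sqrt (M * L)
  have hr : r ^ 2 = M * L := NNReal.sq_sqrt _
  have hr₀ : r ≠ 0 := by simp [r, hM, hL]
  have normalized : (∫⁻ x, (f x / M : ℝ≥0)) * (∫⁻ x, (g x / L : ℝ≥0)) ≤
      (∫⁻ x, (h x / r : ℝ≥0)) ^ 2 := by
    refine mul_le_sq_of_add_le_two_mul (lintegral_add_lintegral_le_of_isLUB_one
      (hf.div_const M) (hg.div_const L) (hh.div_const r) (isLUB_range_div_ciSup hf' hM)
      (isLUB_range_div_ciSup hg' hL) fun x y => ?_)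
    rw [div_mul_div_comm, div_pow, hr]
    gcongr
    exact hfgh x y
  rw [lintegral_coe_eq_mul_lintegral_div f hM, lintegral_coe_eq_mul_lintegral_div g hL,
    lintegral_coe_eq_mul_lintegral_div h hr₀, mul_pow, mul_mul_mul_comm, ← ENNReal.coe_pow, hr,
    ENNReal.coe_mul]
  gcongr

theorem lintegral_eq_iSup_lintegral_min_natCast {α : Type*} [MeasurableSpace α] {μ : Measure α}
    {f : α → ℝ≥0∞} (hf : Measurable f) :
    ∫⁻ x, f x ∂μ = ⨆ N : ℕ, ∫⁻ x, min (f x) N ∂μ := by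
  rw [← lintegral_iSup (fun N => hf.min measurable_const)]
  · refine lintegral_congr fun x => ?_
    rw [← inf_iSup_eq, ENNReal.iSup_natCast, inf_top_eq]
  · exact fun N M hNM x => min_le_min_left _ (by exact_mod_cast hNM)

/-- `IsPrekopaLeindler m μ₁ μ₂ μ` is the Prékopa–Leindler inequality for the mean `m`, with the
Lebesgue measure on its three sides replaced by `μ₁`, `μ₂` and `μ`. The square in the hypothesis
stands in for the geometric mean `√(f a * g b)`. -/
def IsPrekopaLeindler {α : Type*} [MeasurableSpace α] (m : α → α → α) (μ₁ μ₂ μ : Measure α) :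
    Prop :=
  ∀ ⦃f g h : α → ℝ≥0∞⦄, Measurable f → Measurable g → Measurable h →
    (∀ a b, f a * g b ≤ h (m a b) ^ 2) →
      (∫⁻ a, f a ∂μ₁) * (∫⁻ a, g a ∂μ₂) ≤ (∫⁻ a, h a ∂μ) ^ 2

theorem isPrekopaLeindler_volume :
    IsPrekopaLeindler (fun x y : ℝ => (x + y) / 2) volume volume volume := by
  intro f g h hf hg hh hfgh
  have coe_toNNReal (N : ℕ) (u : ℝ → ℝ≥0∞) (x : ℝ) :
      ((min (u x) N).toNNReal : ℝ≥0∞) = min (u x) N :=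
    ENNReal.coe_toNNReal (ne_top_of_le_ne_top (by simp) (min_le_right _ _))
  have bdd (N : ℕ) (u : ℝ → ℝ≥0∞) : BddAbove (Set.range fun x => (min (u x) N).toNNReal) :=
    ⟨N, Set.forall_mem_range.2 fun x => by simp [← ENNReal.coe_le_coe, coe_toNNReal]⟩
  have truncated (M N : ℕ) : (∫⁻ x, min (f x) M) * (∫⁻ x, min (g x) N) ≤ (∫⁻ x, h x) ^ 2 := by
    have := lintegral_mul_lintegral_le_sq_of_bddAbove
      (f := fun x => (min (f x) M).toNNReal) (g := fun x => (min (g x) N).toNNReal)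
      (h := fun x => (min (h x) (max M N : ℕ)).toNNReal)
      (by fun_prop) (by fun_prop) (by fun_prop) (bdd M f) (bdd N g) fun x y => by
        rw [← ENNReal.coe_le_coe]
        push_cast
        simp only [coe_toNNReal]
        rw [(pow_left_mono 2).map_min]
        refine le_min ((mul_le_mul' (min_le_left _ _) (min_le_left _ _)).trans (hfgh x y)) ?_
        rw [sq]
        gcongr <;> exact (min_le_right _ _).trans (by simp)
    simp only [coe_toNNReal] at this
    refine this.trans ?_
    gcongr
    exact min_le_left _ _
  simp_rw [lintegral_eq_iSup_lintegral_min_natCast hf, lintegral_eq_iSup_lintegral_min_natCast hg,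
    ENNReal.iSup_mul, ENNReal.mul_iSup]
  exact iSup₂_le truncated

theorem lintegral_map_withDensity {α β : Type*} [MeasurableSpace α] [MeasurableSpace β]
    {μ : Measure α} {T : α → β} {J : α → ℝ≥0∞} {f : β → ℝ≥0∞} (hT : Measurable T)
    (hJ : Measurable J) (hf : Measurable f) :
    ∫⁻ b, f b ∂(μ.withDensity J).map T = ∫⁻ a, J a * f (T a) ∂μ := by
  rw [lintegral_map hf hT]
  exact lintegral_withDensity_eq_lintegral_mul _ hJ (hf.comp hT)

theorem IsPrekopaLeindler.map_withDensity {α β : Type*} [MeasurableSpace α] [MeasurableSpace β]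
    {m : α → α → α} {m' : β → β → β} {μ₁ μ₂ μ : Measure α} (hm : IsPrekopaLeindler m μ₁ μ₂ μ)
    {T : α → β} (hT : Measurable T) {J₁ J₂ J : α → ℝ≥0∞} (hJ₁ : Measurable J₁)
    (hJ₂ : Measurable J₂) (hJ : Measurable J) (hJ_mul : ∀ u v, J₁ u * J₂ v ≤ J (m u v) ^ 2)
    (hTm : ∀ u v, J₁ u ≠ 0 → J₂ v ≠ 0 → T (m u v) = m' (T u) (T v)) :
    IsPrekopaLeindler m' ((μ₁.withDensity J₁).map T) ((μ₂.withDensity J₂).map T)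
      ((μ.withDensity J).map T) := by
  intro f g h hf hg hh hfgh
  rw [lintegral_map_withDensity hT hJ₁ hf, lintegral_map_withDensity hT hJ₂ hg,
    lintegral_map_withDensity hT hJ hh]
  refine hm (by fun_prop) (by fun_prop) (by fun_prop) fun u v => ?_
  rcases eq_or_ne (J₁ u) 0 with hu | hu
  · simp [hu]
  rcases eq_or_ne (J₂ v) 0 with hv | hv
  · simp [hv]
  calc
    J₁ u * f (T u) * (J₂ v * g (T v)) = J₁ u * J₂ v * (f (T u) * g (T v)) := by ring
    _ ≤ J (m u v) ^ 2 * h (T (m u v)) ^ 2 := by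
      rw [hTm u v hu hv]
      gcongr
      exacts [hJ_mul u v, hfgh _ _]
    _ = (J (m u v) * h (T (m u v))) ^ 2 := (mul_pow ..).symm

section Pi

variable {ι : Type*} {α : ι → Type*} [∀ i, MeasurableSpace (α i)]

theorem lmarginal_mul_lmarginal_le_sq [DecidableEq ι] {m : ∀ i, α i → α i → α i}
    {μ₁ μ₂ μ : ∀ i, Measure (α i)} [∀ i, SigmaFinite (μ₁ i)] [∀ i, SigmaFinite (μ₂ i)]
    [∀ i, SigmaFinite (μ i)] (hm : ∀ i, IsPrekopaLeindler (m i) (μ₁ i) (μ₂ i) (μ i))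
    {f g h : (∀ i, α i) → ℝ≥0∞} (hf : Measurable f) (hg : Measurable g) (hh : Measurable h)
    (hfgh : ∀ x y, f x * g y ≤ h (fun i => m i (x i) (y i)) ^ 2) (s : Finset ι)
    (x y : ∀ i, α i) :
    (∫⋯∫⁻_s, f ∂μ₁) x * (∫⋯∫⁻_s, g ∂μ₂) y ≤ (∫⋯∫⁻_s, h ∂μ) (fun i => m i (x i) (y i)) ^ 2 := by
  induction s using Finset.induction_on generalizing x y with
  | empty => simpa using hfgh x y
  | insert i s hi ih =>
    rw [lmarginal_insert f hf hi, lmarginal_insert g hg hi, lmarginal_insert h hh hi]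
    refine hm i ((hf.lmarginal _).comp (measurable_update x))
      ((hg.lmarginal _).comp (measurable_update y)) ((hh.lmarginal _).comp (measurable_update _))
      fun a b => ?_
    convert ih (Function.update x i a) (Function.update y i b) using 3
    ext j
    rcases eq_or_ne j i with rfl | hj <;> simp [*]

variable [Fintype ι]

theorem IsPrekopaLeindler.pi {m : ∀ i, α i → α i → α i}
    {μ₁ μ₂ μ : ∀ i, Measure (α i)} [∀ i, SigmaFinite (μ₁ i)] [∀ i, SigmaFinite (μ₂ i)]
    [∀ i, SigmaFinite (μ i)] (hm : ∀ i, IsPrekopaLeindler (m i) (μ₁ i) (μ₂ i) (μ i)) :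
    IsPrekopaLeindler (fun x y i => m i (x i) (y i)) (Measure.pi μ₁) (Measure.pi μ₂)
      (Measure.pi μ) := by
  classical
  intro f g h hf hg hh hfgh
  rcases isEmpty_or_nonempty (∀ i, α i) with h₀ | ⟨⟨x⟩⟩
  · simp [lintegral_of_isEmpty]
  · simpa only [lmarginal_univ] using
      lmarginal_mul_lmarginal_le_sq hm hf hg hh hfgh Finset.univ x x

variable (μ : ∀ i, Measure (α i)) [∀ i, SigmaFinite (μ i)] {f : ∀ i, α i → ℝ≥0∞}

theorem lmarginal_prod [DecidableEq ι] (hf : ∀ i, Measurable (f i)) (s : Finset ι)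
    (x : ∀ i, α i) :
    (∫⋯∫⁻_s, (fun y => ∏ i, f i (y i)) ∂μ) x =
      (∏ i ∈ s, ∫⁻ a, f i a ∂μ i) * ∏ i ∈ sᶜ, f i (x i) := by
  induction s using Finset.induction_on generalizing x with
  | empty => simp
  | insert i s hi ih =>
    have prod_compl_update (a : α i) : ∏ j ∈ sᶜ, f j (Function.update x i a j) =
        f i a * ∏ j ∈ (insert i s)ᶜ, f j (x j) := by
      rw [Finset.compl_insert, ← Finset.mul_prod_erase _ _ (Finset.mem_compl.2 hi),
        Function.update_self]
      congr 1
      refine Finset.prod_congr rfl fun j hj => ?_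
      rw [Function.update_of_ne (Finset.ne_of_mem_erase hj)]
    rw [lmarginal_insert _ (by fun_prop) hi, Finset.prod_insert hi]
    simp_rw [ih, prod_compl_update]
    rw [lintegral_const_mul _ (by fun_prop), lintegral_mul_const _ (hf i)]
    ring

theorem lintegral_pi_prod (hf : ∀ i, Measurable (f i)) :
    ∫⁻ x, ∏ i, f i (x i) ∂Measure.pi μ = ∏ i, ∫⁻ a, f i a ∂μ i := by
  classical
  rcases isEmpty_or_nonempty (∀ i, α i) with h₀ | ⟨⟨x⟩⟩
  · obtain ⟨i, hi⟩ := isEmpty_pi.1 h₀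
    rw [lintegral_of_isEmpty, Finset.prod_eq_zero (Finset.mem_univ i) (lintegral_of_isEmpty _ _)]
  · simpa [lmarginal_univ] using lmarginal_prod μ hf Finset.univ x

theorem pi_withDensity [∀ i, SigmaFinite ((μ i).withDensity (f i))]
    (hf : ∀ i, Measurable (f i)) :
    Measure.pi (fun i => (μ i).withDensity (f i)) =
      (Measure.pi μ).withDensity fun x => ∏ i, f i (x i) := by
  refine Measure.pi_eq fun s hs => ?_
  rw [withDensity_apply _ (.univ_pi hs), Measure.restrict_pi_pi, lintegral_pi_prod _ hf]
  simp_rw [withDensity_apply _ (hs _)]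

end Pi

theorem rpow_sub_rpow_mul_add_le {q u v : ℝ} (hq : 1 ≤ q) (hu : 0 < u) (hv : 0 ≤ v)
    (hvu : v ≤ u) : (u ^ q - v ^ q) * (u + v) ≤ 2 * q * (u - v) * u ^ q := by
  have bernoulli : 1 + q * (v / u - 1) ≤ (v / u) ^ q := by
    have hvu₀ : 0 ≤ v / u := by positivity
    simpa using one_add_mul_self_le_rpow_one_add (s := v / u - 1) (by linarith) hq
  have tangent : (u ^ q - v ^ q) * u ≤ q * (u - v) * u ^ q := by
    calc
      (u ^ q - v ^ q) * u = (1 - (v / u) ^ q) * u * u ^ q := by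
        rw [div_rpow hv hu.le]
        field_simp
      _ ≤ (1 - (1 + q * (v / u - 1))) * u * u ^ q := by gcongr
      _ = q * (u - v) * u ^ q := by
        field_simp
        ring
  calc
    (u ^ q - v ^ q) * (u + v) ≤ (u ^ q - v ^ q) * (u + u) := by
      have : v ^ q ≤ u ^ q := by gcongr
      have : 0 ≤ u ^ q - v ^ q := by linarith
      gcongr
    _ ≤ 2 * q * (u - v) * u ^ q := by linarith

theorem sq_rpow_sub_rpow_mul_add_le {q u v : ℝ} (hq : 1 ≤ q) (hu : 0 < u) (hv : 0 < v) :
    ((u ^ q - v ^ q) * (u + v)) ^ 2 ≤ (2 * q * (u - v)) ^ 2 * ((u ^ q) ^ 2 + (v ^ q) ^ 2) := by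
  wlog hvu : v ≤ u generalizing u v
  · linarith [this hv hu (le_of_not_ge hvu)]
  have hpow : v ^ q ≤ u ^ q := by gcongr
  calc
    ((u ^ q - v ^ q) * (u + v)) ^ 2 ≤ (2 * q * (u - v) * u ^ q) ^ 2 :=
      pow_le_pow_left₀ (mul_nonneg (sub_nonneg.2 hpow) (by positivity))
        (rpow_sub_rpow_mul_add_le hq hu hv.le hvu) 2
    _ ≤ (2 * q * (u - v)) ^ 2 * ((u ^ q) ^ 2 + (v ^ q) ^ 2) := by
      rw [mul_pow]
      gcongr
      exact le_add_of_nonneg_right (by positivity)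

theorem mul_mul_exp_sq_le_sq_midpoint {u v : ℝ} (hu : 0 < u) (hv : 0 < v) :
    u * v * exp (((u - v) / (u + v)) ^ 2) ≤ ((u + v) / 2) ^ 2 := by
  set r := (u - v) / (u + v) with hr
  calc
    u * v * exp (r ^ 2) = ((u + v) / 2) ^ 2 * ((1 - r ^ 2) * exp (r ^ 2)) := by
      rw [hr]
      field_simp
      ring
    _ ≤ ((u + v) / 2) ^ 2 * (exp (-r ^ 2) * exp (r ^ 2)) := by
      gcongr
      exact one_sub_le_exp_neg _
    _ = ((u + v) / 2) ^ 2 := by rw [← exp_add]; simp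

theorem mul_sub_sq_mul_le {a K s c : ℝ} (hK : 0 < K) (ha : a ^ 2 ≤ 4 * K * c) :
    s * a - s ^ 2 * K ≤ c := by
  refine le_of_mul_le_mul_left ?_ (by positivity : 0 < 4 * K)
  linarith [sq_nonneg (2 * K * s - a)]

theorem rpow_mul_rpow_mul_exp_le_sq {q δ u v : ℝ} (hq : 1 ≤ q) (hδ : 0 < δ) (hu : 0 < u)
    (hv : 0 < v) (s : ℝ) :
    u ^ δ * v ^ δ *
        exp (s * (u ^ q - v ^ q) - s ^ 2 * (q ^ 2 / δ * ((u ^ q) ^ 2 + (v ^ q) ^ 2))) ≤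
      (((u + v) / 2) ^ δ) ^ 2 := by
  have tilt_le : s * (u ^ q - v ^ q) - s ^ 2 * (q ^ 2 / δ * ((u ^ q) ^ 2 + (v ^ q) ^ 2)) ≤
      ((u - v) / (u + v)) ^ 2 * δ := by
    refine mul_sub_sq_mul_le (by positivity) ?_
    have := sq_rpow_sub_rpow_mul_add_le hq hu hv
    rw [mul_pow, ← le_div_iff₀ (by positivity)] at this
    refine this.trans_eq ?_
    field_simp
    ring
  calc
    _ ≤ u ^ δ * v ^ δ * exp (((u - v) / (u + v)) ^ 2 * δ) := by gcongr
    _ = (u * v * exp (((u - v) / (u + v)) ^ 2)) ^ δ := by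
      rw [mul_rpow (by positivity) (by positivity), mul_rpow hu.le hv.le, exp_mul]
    _ ≤ (((u + v) / 2) ^ 2) ^ δ := by
      gcongr
      exact mul_mul_exp_sq_le_sq_midpoint hu hv
    _ = (((u + v) / 2) ^ δ) ^ 2 := (rpow_pow_comm (by positivity) δ 2).symm

/-- The exponential tilt by `s • G`, compensated by a term of second order in `s`. -/
noncomputable def quadTilt {α : Type*} (G Q : α → ℝ) (s : ℝ) (x : α) : ℝ≥0∞ :=
  ENNReal.ofReal (exp (s * G x - s ^ 2 * Q x))

section QuadTilt

variable {α : Type*} {G Q : α → ℝ}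

theorem measurable_quadTilt [MeasurableSpace α] (hG : Measurable G) (hQ : Measurable Q) (s : ℝ) :
    Measurable (quadTilt G Q s) := by
  unfold quadTilt
  fun_prop

theorem sigmaFinite_withDensity_quadTilt [MeasurableSpace α] {μ : Measure α} [SigmaFinite μ]
    (G Q : α → ℝ) (s : ℝ) :
    SigmaFinite (μ.withDensity (quadTilt G Q s)) :=
  SigmaFinite.withDensity_of_ne_top' fun _ => ENNReal.ofReal_ne_top

theorem quadTilt_sum {ι : Type*} [Fintype ι] (s : ℝ) (x : ι → α) :
    quadTilt (fun y : ι → α => ∑ j, G (y j)) (fun y => ∑ j, Q (y j)) s x =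
      ∏ j, quadTilt G Q s (x j) := by
  simp only [quadTilt]
  rw [← ENNReal.ofReal_prod_of_nonneg fun j _ => (exp_pos _).le, ← exp_sum, Finset.mul_sum,
    Finset.mul_sum, Finset.sum_sub_distrib]

end QuadTilt

theorem map_abs_volume :
    (volume : Measure ℝ).map (|·|) = (2 : ℝ≥0) • volume.restrict (Ioi 0) := by
  ext s hs
  have pos_part : (|·|) ⁻¹' s ∩ Ioi 0 = s ∩ Ioi (0 : ℝ) := by
    ext x
    simp +contextual [abs_of_pos]
  have neg_part : ((|·|) ⁻¹' s \ Ioi 0 : Set ℝ) =ᵐ[volume] Neg.neg ⁻¹' (s ∩ Ioi 0) := by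
    refine Filter.eventuallyEq_set.2 ?_
    filter_upwards [Measure.ae_ne volume 0] with x hx
    rcases lt_or_gt_of_ne hx with hx | hx <;> simp [hx, hx.not_gt, abs_of_neg]
  rw [Measure.map_apply (by fun_prop) hs, ← measure_inter_add_sdiff _ measurableSet_Ioi, pos_part,
    measure_congr neg_part, Measure.measure_preimage_neg, Measure.smul_apply,
    Measure.restrict_apply hs, ← two_mul]
  rfl

theorem image_rpow_Ioi {κ : ℝ} (hκ : κ ≠ 0) : (fun u : ℝ => u ^ κ) '' Ioi 0 = Ioi 0 := by
  refine Set.Subset.antisymm ?_ fun x hx => ⟨x ^ κ⁻¹, ?_, ?_⟩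
  · rintro _ ⟨u, hu, rfl⟩
    exact rpow_pos_of_pos hu κ
  · exact rpow_pos_of_pos hx _
  · exact rpow_inv_rpow (le_of_lt hx) hκ

/-- The density that `u ↦ u ^ κ` carries to the image of Lebesgue measure under `|·|`. -/
noncomputable def powerDensity (κ : ℝ) : ℝ → ℝ≥0∞ :=
  (Ioi 0).indicator fun u => .ofReal (2 * (κ * u ^ (κ - 1)))

theorem measurable_powerDensity (κ : ℝ) : Measurable (powerDensity κ) :=
  Measurable.indicator (by fun_prop) measurableSet_Ioi

theorem map_rpow_withDensity_powerDensity {κ : ℝ} (hκ : 0 < κ) :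
    (volume.withDensity (powerDensity κ)).map (· ^ κ) = volume.map (|·|) := by
  rw [map_abs_volume]
  refine Measure.ext_of_lintegral _ fun f hf => ?_
  have change_of_variables := lintegral_image_eq_lintegral_deriv_mul_of_monotoneOn
    measurableSet_Ioi
    (fun u hu => (hasDerivAt_rpow_const (p := κ) (.inl (ne_of_gt hu))).hasDerivWithinAt)
    ((monotoneOn_rpow_Ici_of_exponent_nonneg hκ.le).mono Set.Ioi_subset_Ici_self) f
  rw [image_rpow_Ioi hκ.ne'] at change_of_variables
  have powerDensity_mul (u : ℝ) : powerDensity κ u * f (u ^ κ) =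
      (Ioi 0).indicator (fun u => 2 * (ENNReal.ofReal (κ * u ^ (κ - 1)) * f (u ^ κ))) u := by
    by_cases hu : u ∈ Ioi 0
    · simp [powerDensity, hu, ENNReal.ofReal_mul, mul_assoc]
    · simp [powerDensity, hu]
  rw [lintegral_map_withDensity (by fun_prop) (measurable_powerDensity κ) hf]
  simp_rw [powerDensity_mul]
  rw [lintegral_indicator measurableSet_Ioi, lintegral_const_mul _ (by fun_prop),
    ← change_of_variables, lintegral_smul_measure]
  rfl

theorem withDensity_map {α β : Type*} [MeasurableSpace α] [MeasurableSpace β] {μ : Measure α}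
    {T : α → β} {g : β → ℝ≥0∞} (hT : Measurable T) (hg : Measurable g) :
    (μ.map T).withDensity g = (μ.withDensity (g ∘ T)).map T := by
  ext s hs
  rw [withDensity_apply _ hs, setLIntegral_map hs hg hT, Measure.map_apply hT hs,
    withDensity_apply _ (hT hs)]
  rfl

/-- The power mean of exponent `1 / κ`. -/
noncomputable def powerMean (κ a b : ℝ) : ℝ :=
  ((a ^ κ⁻¹ + b ^ κ⁻¹) / 2) ^ κ

theorem powerMean_rpow {κ u v : ℝ} (hκ : κ ≠ 0) (hu : 0 ≤ u) (hv : 0 ≤ v) :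
    powerMean κ (u ^ κ) (v ^ κ) = ((u + v) / 2) ^ κ := by
  rw [powerMean, rpow_rpow_inv hu hκ, rpow_rpow_inv hv hκ]

theorem powerMean_pos {κ a b : ℝ} (ha : 0 < a) (hb : 0 < b) : 0 < powerMean κ a b := by
  unfold powerMean
  positivity

/-- The compensated tilt by `x ^ p`; the second-order term is chosen so that the Jacobian of
`u ↦ u ^ κ` absorbs it. -/
noncomputable def powerTilt (κ p : ℝ) : ℝ → ℝ → ℝ≥0∞ :=
  quadTilt (fun x => x ^ p) (fun x => (p * κ) ^ 2 / (κ - 1) * (x ^ p) ^ 2)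

theorem measurable_powerTilt (κ p s : ℝ) : Measurable (powerTilt κ p s) :=
  measurable_quadTilt (by fun_prop) (by fun_prop) s

theorem powerDensity_mul_powerTilt_le_sq {κ p : ℝ} (hκ : 1 < κ) (hp : 1 ≤ p * κ) (s u v : ℝ) :
    powerDensity κ u * powerTilt κ p s (u ^ κ) * (powerDensity κ v * powerTilt κ p (-s) (v ^ κ)) ≤
      powerDensity κ ((u + v) / 2) ^ 2 := by
  rcases le_or_gt u 0 with hu | hu
  · simp [powerDensity, hu]
  rcases le_or_gt v 0 with hv | hv
  · simp [powerDensity, hv]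
  have hw : 0 < (u + v) / 2 := by positivity
  simp only [powerDensity, powerTilt, quadTilt, Set.indicator_of_mem (Set.mem_Ioi.2 hu),
    Set.indicator_of_mem (Set.mem_Ioi.2 hv), Set.indicator_of_mem (Set.mem_Ioi.2 hw)]
  rw [← ENNReal.ofReal_mul (by positivity), ← ENNReal.ofReal_mul (by positivity),
    ← ENNReal.ofReal_mul (by positivity), ← ENNReal.ofReal_pow (by positivity)]
  refine ENNReal.ofReal_le_ofReal ?_
  have key := rpow_mul_rpow_mul_exp_le_sq hp (sub_pos.2 hκ) hu hv s
  simp only [← rpow_mul hu.le, ← rpow_mul hv.le, mul_comm κ p]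
  calc
    _ = (2 * κ) ^ 2 * (u ^ (κ - 1) * v ^ (κ - 1) * exp (s * (u ^ (p * κ) - v ^ (p * κ)) -
          s ^ 2 * ((p * κ) ^ 2 / (κ - 1) * ((u ^ (p * κ)) ^ 2 + (v ^ (p * κ)) ^ 2)))) := by
      rw [mul_mul_mul_comm, ← exp_add]
      ring_nf
    _ ≤ (2 * κ) ^ 2 * (((u + v) / 2) ^ (κ - 1)) ^ 2 := by gcongr
    _ = (2 * (κ * ((u + v) / 2) ^ (κ - 1))) ^ 2 := by ring

theorem isPrekopaLeindler_powerMean {κ p : ℝ} (hκ : 1 < κ) (hp : 1 ≤ p * κ) (s : ℝ) :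
    IsPrekopaLeindler (powerMean κ) ((volume.map (|·|)).withDensity (powerTilt κ p s))
      ((volume.map (|·|)).withDensity (powerTilt κ p (-s))) (volume.map (|·|)) := by
  have hκ₀ : 0 < κ := by linarith
  have tilt_meas := measurable_powerTilt κ p
  have rpow_meas : Measurable fun u : ℝ => u ^ κ := by fun_prop
  have dens_meas := measurable_powerDensity κ
  rw [← map_rpow_withDensity_powerDensity hκ₀, withDensity_map rpow_meas (tilt_meas s),
    withDensity_map rpow_meas (tilt_meas (-s)),
    ← withDensity_mul _ dens_meas ((tilt_meas s).comp rpow_meas),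
    ← withDensity_mul _ dens_meas ((tilt_meas (-s)).comp rpow_meas)]
  refine isPrekopaLeindler_volume.map_withDensity rpow_meas
    (dens_meas.mul ((tilt_meas s).comp rpow_meas))
    (dens_meas.mul ((tilt_meas (-s)).comp rpow_meas)) dens_meas
    (powerDensity_mul_powerTilt_le_sq hκ hp s) fun u v hu hv => ?_
  have pos_of_ne (w t : ℝ) (hw : (powerDensity κ * powerTilt κ p t ∘ fun u => u ^ κ) w ≠ 0) :
      0 < w := Set.mem_of_indicator_ne_zero (left_ne_zero_of_mul hw)
  exact (powerMean_rpow hκ₀.ne' (pos_of_ne u s hu).le (pos_of_ne v _ hv).le).symm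

/-- The open positive orthant. -/
def posOrthant (ι : Type*) : Set (ι → ℝ) :=
  Set.univ.pi fun _ => Ioi 0

theorem mem_posOrthant {ι : Type*} {x : ι → ℝ} : x ∈ posOrthant ι ↔ ∀ i, 0 < x i := by
  simp [posOrthant]

theorem convex_posOrthant {ι : Type*} : Convex ℝ (posOrthant ι) :=
  convex_pi fun _ _ => convex_Ioi 0

theorem apply_abs_of_forall_sign {ι β : Type*} {φ : (ι → ℝ) → β}
    (hφ : ∀ ε : ι → ℝ, (∀ i, ε i = 1 ∨ ε i = -1) → ∀ x, φ (fun i => ε i * x i) = φ x)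
    (x : ι → ℝ) : φ |x| = φ x := by
  have abs_eq : |x| = fun i => (if x i < 0 then -1 else 1) * x i := by
    ext i
    split_ifs with hi
    · simp [abs_of_neg hi]
    · simp [abs_of_nonneg (not_lt.1 hi)]
  rw [abs_eq]
  exact hφ _ (fun i => by split_ifs <;> simp) x

section Orthant

variable {ι : Type*} {φ : (ι → ℝ) → ℝ} {κ p : ℝ}

theorem isOpen_posOrthant [Finite ι] : IsOpen (posOrthant ι) :=
  isOpen_set_pi Set.finite_univ fun _ _ => isOpen_Ioi

theorem continuousOn_of_convexOn_comp_rpow [Finite ι] (hκ : κ ≠ 0)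
    (hφ : ConvexOn ℝ (posOrthant ι) fun x => φ fun i => x i ^ κ) :
    ContinuousOn φ (posOrthant ι) := by
  have root_continuous : ContinuousOn (fun (x : ι → ℝ) i => x i ^ κ⁻¹) (posOrthant ι) :=
    continuousOn_pi.2 fun i => (continuous_apply i).continuousOn.rpow_const fun x hx =>
      .inl (mem_posOrthant.1 hx i).ne'
  have root_mem : Set.MapsTo (fun (x : ι → ℝ) i => x i ^ κ⁻¹) (posOrthant ι) (posOrthant ι) :=
    fun x hx => mem_posOrthant.2 fun i => rpow_pos_of_pos (mem_posOrthant.1 hx i) _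
  cases nonempty_fintype ι
  refine ((hφ.continuousOn isOpen_posOrthant).comp root_continuous root_mem).congr fun x hx => ?_
  simp [rpow_inv_rpow (mem_posOrthant.1 hx _).le hκ]

/-- The density `e^{-φ}`, cut off outside the open positive orthant. -/
noncomputable def orthantDensity (φ : (ι → ℝ) → ℝ) : (ι → ℝ) → ℝ≥0∞ :=
  (posOrthant ι).indicator fun x => .ofReal (exp (-φ x))

theorem measurable_orthantDensity [Finite ι] (hφ : ContinuousOn φ (posOrthant ι)) :
    Measurable (orthantDensity φ) := by
  classical
  rw [orthantDensity, ← Set.piecewise_eq_indicator]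
  exact ContinuousOn.measurable_piecewise
    (ENNReal.continuous_ofReal.comp_continuousOn (continuous_exp.comp_continuousOn hφ.neg))
    continuousOn_const isOpen_posOrthant.measurableSet

instance sigmaFinite_map_abs_volume : SigmaFinite ((volume : Measure ℝ).map (|·|)) := by
  rw [map_abs_volume]
  infer_instance

theorem map_abs_withDensity_exp_neg [Fintype ι] (hφ_abs : ∀ x, φ |x| = φ x)
    (hφ : ContinuousOn φ (posOrthant ι)) :
    (volume.withDensity fun x => .ofReal (exp (-φ x))).map (|·|) =
      (Measure.pi fun _ => volume.map (|·|)).withDensity (orthantDensity φ) := by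
  have density_ae_eq : (fun x => .ofReal (exp (-φ x))) =ᵐ[volume] orthantDensity φ ∘ (|·|) := by
    have ne_zero : ∀ᵐ x : ι → ℝ, ∀ i, x i ≠ 0 :=
      ae_all_iff.2 fun i => Measure.ae_eval_ne (μ := fun _ => volume) i 0
    filter_upwards [ne_zero] with x hx
    have abs_mem : |x| ∈ posOrthant ι := mem_posOrthant.2 fun i => abs_pos.2 (hx i)
    simp [orthantDensity, abs_mem, hφ_abs]
  have abs_meas : Measurable fun x : ι → ℝ => |x| := by
    simp only [Pi.abs_def]
    fun_prop
  have pi_map : Measure.pi (fun _ : ι => (volume : Measure ℝ).map (|·|)) = volume.map (|·|) :=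
    (Measure.pi_map_pi fun _ => by fun_prop).symm
  rw [withDensity_congr_ae density_ae_eq, pi_map,
    withDensity_map abs_meas (measurable_orthantDensity hφ)]

theorem orthantDensity_mul_le_sq (hκ : κ ≠ 0)
    (hφ : ConvexOn ℝ (posOrthant ι) fun x => φ fun i => x i ^ κ) (a b : ι → ℝ) :
    orthantDensity φ a * orthantDensity φ b ≤
      orthantDensity φ (fun i => powerMean κ (a i) (b i)) ^ 2 := by
  by_cases ha : a ∈ posOrthant ι
  swap
  · simp [orthantDensity, ha]
  by_cases hb : b ∈ posOrthant ι
  swap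
  · simp [orthantDensity, hb]
  have hab : (fun i => powerMean κ (a i) (b i)) ∈ posOrthant ι :=
    mem_posOrthant.2 fun i => powerMean_pos (mem_posOrthant.1 ha i) (mem_posOrthant.1 hb i)
  have root_mem {x : ι → ℝ} (hx : x ∈ posOrthant ι) : (fun i => x i ^ κ⁻¹) ∈ posOrthant ι :=
    mem_posOrthant.2 fun i => rpow_pos_of_pos (mem_posOrthant.1 hx i) _
  have midpoint_le : φ (fun i => powerMean κ (a i) (b i)) ≤ (φ a + φ b) / 2 := by
    have := hφ.2 (root_mem ha) (root_mem hb) one_half_pos.le one_half_pos.le (add_halves 1)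
    simp only [rpow_inv_rpow (mem_posOrthant.1 ha _).le hκ, Pi.add_apply, Pi.smul_apply,
      rpow_inv_rpow (mem_posOrthant.1 hb _).le hκ, smul_eq_mul, ← mul_add] at this
    calc
      _ = _ := by simp only [powerMean, div_eq_inv_mul, mul_one]
      _ ≤ _ := this
      _ = _ := by ring
  simp only [orthantDensity, Set.indicator_of_mem, ha, hb, hab]
  rw [← ENNReal.ofReal_mul (exp_pos _).le, ← ENNReal.ofReal_pow (exp_pos _).le, ← exp_add,
    ← exp_nat_mul]
  refine ENNReal.ofReal_le_ofReal (exp_le_exp.2 ?_)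
  push_cast
  linarith

theorem lintegral_prod_apply_abs [Fintype ι] (hφ_abs : ∀ x, φ |x| = φ x)
    (hφ : ContinuousOn φ (posOrthant ι)) {w : ℝ → ℝ≥0∞} (hw : Measurable w)
    [SigmaFinite ((volume.map (|·|)).withDensity w)] :
    ∫⁻ x, ∏ j, w |x j| ∂(volume.withDensity fun x => .ofReal (exp (-φ x))) =
      ∫⁻ x, orthantDensity φ x ∂Measure.pi fun _ => (volume.map (|·|)).withDensity w := by
  have prod_meas : Measurable fun x : ι → ℝ => ∏ j, w (x j) := by fun_prop
  have abs_meas : Measurable fun x : ι → ℝ => |x| := by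
    simp only [Pi.abs_def]
    fun_prop
  have density_meas := measurable_orthantDensity hφ
  calc
    _ = ∫⁻ x, ∏ j, w (x j) ∂(volume.withDensity fun x => .ofReal (exp (-φ x))).map (|·|) :=
      (lintegral_map prod_meas abs_meas).symm
    _ = ∫⁻ x, orthantDensity φ x * ∏ j, w (x j) ∂Measure.pi fun _ => volume.map (|·|) := by
      rw [map_abs_withDensity_exp_neg hφ_abs hφ,
        lintegral_withDensity_eq_lintegral_mul _ density_meas prod_meas]
      rfl
    _ = _ := by
      rw [pi_withDensity _ fun _ => hw,
        lintegral_withDensity_eq_lintegral_mul _ prod_meas density_meas]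
      simp [mul_comm]

theorem lintegral_prod_powerTilt_mul_lintegral_prod_powerTilt_neg_le [Fintype ι] (hκ : 1 < κ)
    (hp : 1 ≤ p * κ) (hφ_abs : ∀ x, φ |x| = φ x)
    (hφ : ConvexOn ℝ (posOrthant ι) fun x => φ fun i => x i ^ κ) (s : ℝ) {μ : Measure (ι → ℝ)}
    (hμ : μ = volume.withDensity fun x => .ofReal (exp (-φ x))) :
    (∫⁻ x, ∏ j, powerTilt κ p s |x j| ∂μ) * ∫⁻ x, ∏ j, powerTilt κ p (-s) |x j| ∂μ ≤
      μ Set.univ ^ 2 := by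
  subst hμ
  have hκ₀ : κ ≠ 0 := by positivity
  have hφ_cont := continuousOn_of_convexOn_comp_rpow hκ₀ hφ
  have density_meas := measurable_orthantDensity hφ_cont
  have (t : ℝ) : SigmaFinite ((volume.map (|·|)).withDensity (powerTilt κ p t)) :=
    sigmaFinite_withDensity_quadTilt _ _ t
  have total_mass : (volume.withDensity fun x => .ofReal (exp (-φ x))) Set.univ =
      ∫⁻ x, orthantDensity φ x ∂Measure.pi fun _ => volume.map (|·|) := by
    have : SigmaFinite (((volume : Measure ℝ).map (|·|)).withDensity 1) := by
      rw [withDensity_one]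
      infer_instance
    simpa [withDensity_one] using lintegral_prod_apply_abs (w := 1) hφ_abs hφ_cont measurable_one
  rw [lintegral_prod_apply_abs hφ_abs hφ_cont (measurable_powerTilt κ p s),
    lintegral_prod_apply_abs hφ_abs hφ_cont (measurable_powerTilt κ p (-s)), total_mass]
  exact IsPrekopaLeindler.pi (fun _ => isPrekopaLeindler_powerMean hκ hp s) density_meas
    density_meas density_meas (orthantDensity_mul_le_sq hκ₀ hφ)

end Orthant

theorem two_add_sq_le_exp_add_exp_neg (a : ℝ) : 2 + a ^ 2 ≤ exp a + exp (-a) := by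
  have half_sq_le : (a / 2) ^ 2 ≤ sinh (a / 2) ^ 2 := by
    wlog ha : 0 ≤ a generalizing a
    · simpa [neg_div] using this (-a) (by linarith)
    have ha₂ : 0 ≤ a / 2 := by positivity
    gcongr
    exact self_le_sinh_iff.2 ha₂
  have cosh_two : cosh a = cosh (a / 2) ^ 2 + sinh (a / 2) ^ 2 := by
    rw [← cosh_two_mul, mul_div_cancel₀ a two_ne_zero]
  linarith [cosh_eq a, cosh_sq' (a / 2)]

theorem two_sub_add_sq_mul_exp_neg_le (a b : ℝ) :
    2 - 2 * b + a ^ 2 * exp (-b) ≤ exp (a - b) + exp (-a - b) := by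
  calc
    2 - 2 * b + a ^ 2 * exp (-b) ≤ (2 + a ^ 2) * exp (-b) := by linarith [one_sub_le_exp_neg b]
    _ ≤ (exp a + exp (-a)) * exp (-b) :=
      mul_le_mul_of_nonneg_right (two_add_sq_le_exp_add_exp_neg a) (exp_pos _).le
    _ = exp (a - b) + exp (-a - b) := by simp only [sub_eq_add_neg, exp_add, add_mul]

theorem norm_sq_mul_exp_neg_le (a : ℝ) {b : ℝ} (hb : 0 ≤ b) :
    ‖a ^ 2 * exp (-b)‖ ≤ a ^ 2 := by
  rw [norm_of_nonneg (by positivity)]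
  exact mul_le_of_le_one_right (sq_nonneg _) (exp_le_one_iff.2 (neg_nonpos.2 hb))

section SecondMoment

variable {α : Type*} [MeasurableSpace α] {μ : Measure α} {D R : α → ℝ}

theorem integrable_and_integral_exp_le_one_of_lintegral_le_one (hD : Measurable D)
    (hR : Measurable R) {s : ℝ} (h : ∫⁻ x, quadTilt D R s x ∂μ ≤ 1) :
    Integrable (fun x => exp (s * D x - s ^ 2 * R x)) μ ∧
      ∫ x, exp (s * D x - s ^ 2 * R x) ∂μ ≤ 1 := by
  have meas : Measurable fun x => exp (s * D x - s ^ 2 * R x) := by fun_prop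
  have nonneg : 0 ≤ᵐ[μ] fun x => exp (s * D x - s ^ 2 * R x) := .of_forall fun x => (exp_pos _).le
  refine ⟨(lintegral_ofReal_ne_top_iff_integrable meas.aestronglyMeasurable nonneg).1
    (h.trans_lt ENNReal.one_lt_top).ne, ?_⟩
  rw [integral_eq_lintegral_of_nonneg_ae nonneg meas.aestronglyMeasurable]
  exact ENNReal.toReal_le_of_le_ofReal zero_le_one (by simpa [quadTilt] using h)

theorem integral_sq_mul_exp_neg_le_of_lintegral_quadTilt_le_one [IsProbabilityMeasure μ]
    (hD : Measurable D) (hR : Measurable R)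
    (hD_int : Integrable (fun x => D x ^ 2) μ) (hR_int : Integrable R μ) (hR₀ : ∀ x, 0 ≤ R x)
    (h : ∀ s, ∫⁻ x, quadTilt D R s x ∂μ ≤ 1) {s : ℝ} (hs : s ≠ 0) :
    ∫ x, D x ^ 2 * exp (-(s ^ 2 * R x)) ∂μ ≤ 2 * ∫ x, R x ∂μ := by
  obtain ⟨tilt_int, tilt_le⟩ :=
    integrable_and_integral_exp_le_one_of_lintegral_le_one hD hR (h s)
  obtain ⟨tilt_neg_int, tilt_neg_le⟩ :=
    integrable_and_integral_exp_le_one_of_lintegral_le_one hD hR (h (-s))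
  have sq_int : Integrable (fun x => D x ^ 2 * exp (-(s ^ 2 * R x))) μ :=
    hD_int.mono' (by fun_prop)
      (.of_forall fun x => norm_sq_mul_exp_neg_le _ (mul_nonneg (sq_nonneg s) (hR₀ x)))
  have lower_int : Integrable (fun x => 2 - s ^ 2 * 2 * R x) μ :=
    (integrable_const _).sub (hR_int.const_mul _)
  have expansion : 2 - s ^ 2 * (2 * ∫ x, R x ∂μ) + s ^ 2 * ∫ x, D x ^ 2 * exp (-(s ^ 2 * R x)) ∂μ
      ≤ 1 + 1 := by
    calc
      _ = ∫ x, (2 - s ^ 2 * 2 * R x) + s ^ 2 * (D x ^ 2 * exp (-(s ^ 2 * R x))) ∂μ := by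
        rw [integral_add lower_int (sq_int.const_mul _),
          integral_sub (integrable_const _) (hR_int.const_mul _), integral_const_mul,
          integral_const_mul]
        simp [mul_assoc]
      _ ≤ ∫ x, exp (s * D x - s ^ 2 * R x) + exp (-s * D x - (-s) ^ 2 * R x) ∂μ := by
        refine integral_mono (lower_int.add (sq_int.const_mul _)) (tilt_int.add tilt_neg_int)
          fun x => ?_
        have := two_sub_add_sq_mul_exp_neg_le (s * D x) (s ^ 2 * R x)
        simp only [neg_mul, neg_sq]
        linarith
      _ ≤ 1 + 1 := by
        rw [integral_add tilt_int tilt_neg_int]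
        exact add_le_add tilt_le tilt_neg_le
  exact le_of_mul_le_mul_left (by linarith) (by positivity : 0 < s ^ 2)

theorem integral_sq_le_of_lintegral_quadTilt_le_one [IsProbabilityMeasure μ]
    (hD : Measurable D) (hR : Measurable R)
    (hD_int : Integrable (fun x => D x ^ 2) μ) (hR_int : Integrable R μ) (hR₀ : ∀ x, 0 ≤ R x)
    (h : ∀ s, ∫⁻ x, quadTilt D R s x ∂μ ≤ 1) :
    ∫ x, D x ^ 2 ∂μ ≤ 2 * ∫ x, R x ∂μ := by
  have cont : Continuous fun s : ℝ => ∫ x, D x ^ 2 * exp (-(s ^ 2 * R x)) ∂μ :=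
    continuous_of_dominated (fun s => by fun_prop)
      (fun s => .of_forall fun x => norm_sq_mul_exp_neg_le _ (mul_nonneg (sq_nonneg s) (hR₀ x)))
      hD_int (.of_forall fun x => by fun_prop)
  have lim := (cont.tendsto 0).mono_left (nhdsWithin_le_nhds (s := {0}ᶜ))
  simp only [ne_eq, OfNat.ofNat_ne_zero, not_false_eq_true, zero_pow, zero_mul, neg_zero, exp_zero,
    mul_one] at lim
  refine le_of_tendsto lim ?_
  filter_upwards [self_mem_nhdsWithin] with s hs
  exact integral_sq_mul_exp_neg_le_of_lintegral_quadTilt_le_one hD hR hD_int hR_int hR₀ h hs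

end SecondMoment

section Variance

variable {α : Type*} [MeasurableSpace α] {μ : Measure α} [IsProbabilityMeasure μ] {G Q : α → ℝ}

theorem integral_prod_sub_sq_eq_two_mul_variance (hG : MemLp G 2 μ) :
    ∫ z, (G z.1 - G z.2) ^ 2 ∂μ.prod μ = 2 * Var[G; μ] := by
  have int := hG.integrable one_le_two
  have mean_zero : ∫ z, G z.1 - G z.2 ∂μ.prod μ = 0 := by
    rw [integral_sub (int.comp_fst μ) (int.comp_snd μ), integral_fun_fst, integral_fun_snd,
      sub_self]
  have meas : AEMeasurable (fun z => G z.1 - G z.2) (μ.prod μ) :=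
    (hG.comp_fst μ).aemeasurable.sub (hG.comp_snd μ).aemeasurable
  rw [← variance_of_integral_eq_zero meas mean_zero]
  have variance_add := variance_add_prod hG hG.neg
  simp only [Pi.neg_apply, ← sub_eq_add_neg] at variance_add
  rw [variance_add, variance_neg, two_mul]

theorem variance_le_of_lintegral_quadTilt_mul_le_one (hG : Measurable G) (hQ : Measurable Q)
    (hG_mem : MemLp G 2 μ) (hQ_int : Integrable Q μ) (hQ₀ : ∀ x, 0 ≤ Q x)
    (h : ∀ s, (∫⁻ x, quadTilt G Q s x ∂μ) * ∫⁻ x, quadTilt G Q (-s) x ∂μ ≤ 1) :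
    Var[G; μ] ≤ 2 * ∫ x, Q x ∂μ := by
  have tilt_le (s : ℝ) :
      ∫⁻ z, quadTilt (fun z => G z.1 - G z.2) (fun z => Q z.1 + Q z.2) s z ∂μ.prod μ ≤ 1 := by
    refine le_of_eq_of_le ?_ (h s)
    rw [← lintegral_prod_mul (measurable_quadTilt hG hQ s).aemeasurable
      (measurable_quadTilt hG hQ (-s)).aemeasurable]
    refine lintegral_congr fun z => ?_
    rw [quadTilt, quadTilt, quadTilt, ← ENNReal.ofReal_mul (exp_pos _).le, ← exp_add]
    ring_nf
  have second_moment := integral_sq_le_of_lintegral_quadTilt_le_one (by fun_prop) (by fun_prop)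
    ((hG_mem.comp_fst μ).sub (hG_mem.comp_snd μ)).integrable_sq
    ((hQ_int.comp_fst μ).add (hQ_int.comp_snd μ)) (fun z => add_nonneg (hQ₀ z.1) (hQ₀ z.2)) tilt_le
  simp only [Pi.sub_apply, Pi.add_apply] at second_moment
  rw [integral_prod_sub_sq_eq_two_mul_variance hG_mem,
    integral_add (hQ_int.comp_fst μ) (hQ_int.comp_snd μ), integral_fun_fst,
    integral_fun_snd] at second_moment
  simp only [probReal_univ, one_smul] at second_moment
  linarith

end Variance

theorem memLp_of_memLp_sum {ι α : Type*} [Fintype ι] [MeasurableSpace α] {μ : Measure α}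
    {f : ι → α → ℝ} {q : ℝ≥0∞} (hf : ∀ i, AEStronglyMeasurable (f i) μ)
    (hf₀ : ∀ i x, 0 ≤ f i x) (hsum : MemLp (fun x => ∑ i, f i x) q μ) (i : ι) :
    MemLp (f i) q μ := by
  refine hsum.mono (hf i) (.of_forall fun x => ?_)
  rw [norm_of_nonneg (hf₀ i x), norm_of_nonneg (Finset.sum_nonneg fun i _ => hf₀ i x)]
  exact Finset.single_le_sum (f := fun i => f i x) (fun i _ => hf₀ i x) (Finset.mem_univ i)

section PowerSum

variable {ι : Type*} [Fintype ι] {κ p : ℝ} {φ : (ι → ℝ) → ℝ}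

theorem prod_powerTilt_abs (s : ℝ) (x : ι → ℝ) : ∏ j, powerTilt κ p s |x j| =
    quadTilt (fun x => ∑ j, |x j| ^ p) (fun x => ∑ j, (p * κ) ^ 2 / (κ - 1) * (|x j| ^ p) ^ 2)
      s x :=
  (quadTilt_sum s |x|).symm

theorem variance_sum_abs_rpow_le (hκ : 1 < κ) (hp : 1 ≤ p * κ) (hφ_abs : ∀ x, φ |x| = φ x)
    (hφ : ConvexOn ℝ (posOrthant ι) fun x => φ fun i => x i ^ κ) {μ : Measure (ι → ℝ)}
    [IsProbabilityMeasure μ] (hμ : μ = volume.withDensity fun x => .ofReal (exp (-φ x))) :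
    Var[fun x => ∑ j, |x j| ^ p; μ] ≤
      2 * ((p * κ) ^ 2 / (κ - 1)) * ∑ j, ∫ x, (|x j| ^ p) ^ 2 ∂μ := by
  have : 0 ≤ (p * κ) ^ 2 / (κ - 1) := div_nonneg (sq_nonneg _) (sub_pos.2 hκ).le
  have pow_meas (j : ι) : Measurable fun x : ι → ℝ => |x j| ^ p := by fun_prop
  have sum_meas : Measurable fun x : ι → ℝ => ∑ j, |x j| ^ p := by fun_prop
  by_cases hG : MemLp (fun x : ι → ℝ => ∑ j, |x j| ^ p) 2 μ
  swap
  · rw [variance_of_not_memLp sum_meas.aestronglyMeasurable hG]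
    positivity
  have sq_int (j : ι) : Integrable (fun x => (p * κ) ^ 2 / (κ - 1) * (|x j| ^ p) ^ 2) μ :=
    (memLp_of_memLp_sum (fun j => (pow_meas j).aestronglyMeasurable) (fun _ _ => by positivity) hG
      j).integrable_sq.const_mul _
  have tilt_le (s : ℝ) := lintegral_prod_powerTilt_mul_lintegral_prod_powerTilt_neg_le hκ hp
    hφ_abs hφ s hμ
  simp only [prod_powerTilt_abs, measure_univ, one_pow] at tilt_le
  have := variance_le_of_lintegral_quadTilt_mul_le_one sum_meas (by fun_prop) hG
    (integrable_finsetSum _ fun j _ => sq_int j)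
    (fun x => Finset.sum_nonneg fun j _ => by positivity) tilt_le
  rw [integral_finsetSum _ fun j _ => sq_int j] at this
  simpa only [integral_const_mul, mul_assoc, ← Finset.mul_sum] using this

theorem var_norm_sq_le_general {Ω : Type*} [MeasurableSpace Ω] {P : Measure Ω}
    [IsProbabilityMeasure P] (hκ : 1 < κ) (hp : 1 ≤ p * κ)
    (hφ_abs : ∀ x, φ |x| = φ x) (hφ : ConvexOn ℝ (posOrthant ι) fun x => φ fun i => x i ^ κ)
    {X : Ω → ι → ℝ} (hX : HasLaw X (volume.withDensity fun x => .ofReal (exp (-φ x))) P) :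
    Var[fun ω => ∑ j, |X ω j| ^ p; P] ≤
      2 * ((p * κ) ^ 2 / (κ - 1)) * ∑ j, ∫ ω, |X ω j| ^ (2 * p) ∂P := by
  have := hX.isProbabilityMeasure_iff.1 inferInstance
  have sum_meas : Measurable fun x : ι → ℝ => ∑ j, |x j| ^ p := by fun_prop
  have integral_eq (j : ι) : ∫ x, (|x j| ^ p) ^ 2 ∂P.map X = ∫ ω, |X ω j| ^ (2 * p) ∂P := by
    rw [integral_map hX.aemeasurable (Measurable.aestronglyMeasurable (by fun_prop))]
    simp only [mul_comm 2 p, rpow_mul (abs_nonneg _), rpow_two]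
  have variance_le := variance_sum_abs_rpow_le hκ hp hφ_abs hφ rfl
  rw [← hX.map_eq, variance_map sum_meas.aemeasurable hX.aemeasurable] at variance_le
  simpa only [integral_eq, Function.comp_def] using variance_le

end PowerSum

/-- Poincaré-type inequality (Klartag): for an unconditional density `e^{-φ}` with
`φ(x₁^κ, …, xₙ^κ)` convex on the positive orthant, `Var |X|² ≤ c_κ ∑ E|X_j|⁴`. -/
theorem var_norm_sq_le (κ : ℝ) (hκ : 1 < κ) :
    ∃ c : ℝ, 0 < c ∧
      ∀ (n : ℕ) (Ω : Type) [MeasureSpace Ω] [IsProbabilityMeasure (ℙ : Measure Ω)]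
        (X : Ω → Fin n → ℝ) (φ : (Fin n → ℝ) → ℝ),
        Measurable X →
        -- e^{-φ} is a probability density
        IsProbabilityMeasure ((volume : Measure (Fin n → ℝ)).withDensity
          (fun x => ENNReal.ofReal (Real.exp (-φ x)))) →
        -- X has density e^{-φ(x)}
        Measure.map X ℙ = (volume : Measure (Fin n → ℝ)).withDensity
          (fun x => ENNReal.ofReal (Real.exp (-φ x))) →
        -- the density is unconditional
        (∀ ε : Fin n → ℝ, (∀ i, ε i = 1 ∨ ε i = -1) →
          ∀ x, φ (fun i => ε i * x i) = φ x) →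
        -- φ(x₁^κ, …, xₙ^κ) is convex on the positive orthant
        ConvexOn ℝ {x : Fin n → ℝ | ∀ i, 0 ≤ x i} (fun x => φ (fun i => x i ^ κ)) →
        variance (fun ω => ∑ j, (X ω j) ^ 2) ℙ ≤ c * ∑ j, ∫ ω, |X ω j| ^ 4 ∂ℙ := by
  have : 0 < κ - 1 := sub_pos.2 hκ
  refine ⟨2 * ((2 * κ) ^ 2 / (κ - 1)), by positivity, fun n Ω _ _ X φ hX _ hlaw hsign hconv => ?_⟩
  have hφ : ConvexOn ℝ (posOrthant (Fin n)) fun x => φ fun i => x i ^ κ :=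
    hconv.subset (fun x hx i => (mem_posOrthant.1 hx i).le) convex_posOrthant
  have variance_le := var_norm_sq_le_general hκ (p := 2) (by linarith)
    (apply_abs_of_forall_sign hsign) hφ ⟨hX.aemeasurable, hlaw⟩
  rw [show (2 * 2 : ℝ) = 4 by norm_num] at variance_le
  simpa only [rpow_ofNat, sq_abs] using variance_le
end
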